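/- arXiv:2605.23773 — 2 statements merged into one kernel-verified Lean document; each statement's English description precedes it below -/
import Mathlib

section
/- Let ℓ, m, ℓ', m' be positive integers such that ℓ·m = ℓ'·m' and ℓ ≤ ℓ' ≤ m' ≤ m. Then τ(ℓ,m) ≤ τ(ℓ',m'), i.e., the number of spanning trees of the ℓ×m rectangular grid graph is at most the number of spanning trees of the ℓ'×m' rectangular grid graph. -/
set_option linter.unusedSectionVars false

/-- The rectangular grid graph `R_{ℓ,m}`: the box (Cartesian) product of the path
graphs on `ℓ` and `m` vertices. -/
def gridGraph (l m : ℕ) : SimpleGraph (Fin l × Fin m) :=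
  (SimpleGraph.pathGraph l).boxProd (SimpleGraph.pathGraph m)

/-- `gridTau l m` is the number of spanning trees of the `l × m` rectangular grid graph,
i.e. the number of spanning subgraphs of `gridGraph l m` that are trees. -/
noncomputable def gridTau (l m : ℕ) : ℕ :=
  Set.ncard {H : (gridGraph l m).Subgraph | H.IsSpanning ∧ H.coe.IsTree}

namespace Bal
open Finset

section MTT
variable {V : Type*} [Fintype V] [DecidableEq V]

/-- matrix of a functional graph -/
def fMat (r : V) (f : V → V) : Matrix V V ℝ :=
  fun v => if v = r then Pi.single r 1 else Pi.single v 1 - Pi.single (f v) 1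

lemma det_fMat_zero (r : V) (f : V → V) (hr : f r = r) (h : ¬ ∀ v, ∃ k : ℕ, f^[k] v = r) :
    (fMat r f).det = 0 := by
  classical
  push Not at h
  obtain ⟨v0, hv0⟩ := h
  rw [← Matrix.exists_mulVec_eq_zero_iff]
  refine ⟨fun v => if ∀ k : ℕ, f^[k] v ≠ r then 1 else 0, ?_, ?_⟩
  · intro h0
    have := congrFun h0 v0
    simp [hv0] at this
  · funext v
    have hrr : ¬ ∀ k : ℕ, f^[k] r ≠ r := fun h => h 0 rfl
    by_cases hv : v = r
    · subst hv
      simp only [Matrix.mulVec, fMat, if_true, single_dotProduct, if_neg hrr]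
      simp
    · simp only [Matrix.mulVec, fMat, if_neg hv, sub_dotProduct, single_dotProduct]
      have : (∀ k : ℕ, f^[k] v ≠ r) ↔ (∀ k : ℕ, f^[k] (f v) ≠ r) := by
        constructor
        · intro h k
          have := h (k+1)
          rwa [Function.iterate_succ_apply] at this
        · intro h k
          cases k with
          | zero => exact hv
          | succ k => rw [Function.iterate_succ_apply]; exact h k
      simp [this]

lemma det_fMat_one (r : V) (f : V → V) (h : ∀ v, ∃ k : ℕ, f^[k] v = r) :
    (fMat r f).det = 1 := by
  classical
  let d : V → ℕ := fun v => Nat.find (h v)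
  have hd : ∀ v, v ≠ r → d (f v) < d v := by
    intro v hv
    have h1 := Nat.find_spec (h v)
    have h2 : Nat.find (h v) ≠ 0 := by
      intro h0; rw [h0] at h1; exact hv h1
    obtain ⟨k, hk⟩ := Nat.exists_eq_succ_of_ne_zero h2
    rw [hk, Function.iterate_succ_apply] at h1
    have h3 : Nat.find (h (f v)) ≤ k := Nat.find_min' _ h1
    show Nat.find (h (f v)) < Nat.find (h v)
    omega
  have hbt : (fMat r f).transpose.BlockTriangular d := by
    intro i j hij
    simp only [Matrix.transpose_apply, fMat]
    have hne : i ≠ j := by rintro rfl; exact lt_irrefl _ hij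
    by_cases hj : j = r
    · subst hj; simp [hne]
    · have : i ≠ f j := by
        rintro rfl
        have := hd j hj
        omega
      simp [hj, hne, this]
  rw [← Matrix.det_transpose, hbt.det]
  apply Finset.prod_eq_one
  intro a _
  have : (fMat r f).transpose.toSquareBlock d a = 1 := by
    ext ⟨i, hi⟩ ⟨j, hj⟩
    simp only [Matrix.toSquareBlock_def, Matrix.of_apply, Matrix.transpose_apply, fMat,
      Matrix.one_apply, Subtype.mk.injEq]
    by_cases hjr : j = r
    · subst hjr; simp [Pi.single_apply]
    · have : i ≠ f j := by
        rintro rfl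
        have := hd j hjr
        omega
      simp [hjr, Pi.single_apply, this]
  rw [this, Matrix.det_one]

variable (G : SimpleGraph V) [DecidableRel G.Adj]

open Classical in
/-- parent functions -/
noncomputable def parents (r : V) : Finset (V → V) :=
  (Fintype.piFinset (fun v => if v = r then {r} else G.neighborFinset v)).filter
    (fun f => ∀ v, ∃ k : ℕ, f^[k] v = r)

lemma mem_parents {r : V} {f : V → V} : f ∈ parents G r ↔
    f r = r ∧ (∀ v, v ≠ r → G.Adj v (f v)) ∧ ∀ v, ∃ k : ℕ, f^[k] v = r := by
  classical
  simp only [parents, mem_filter, Fintype.mem_piFinset, ← and_assoc]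
  refine and_congr_left fun _ => ⟨fun h => ⟨by simpa using h r, fun v hv => ?_⟩, fun h v => ?_⟩
  · simpa [hv] using h v
  · by_cases hv : v = r
    · subst hv; simp [h.1]
    · simpa [hv] using h.2 v hv

lemma adj_lap (r : V) : (G.lapMatrix ℝ).adjugate r r = ((parents G r).card : ℝ) := by
  classical
  rw [Matrix.adjugate_apply]
  have key : (G.lapMatrix ℝ).updateRow r (Pi.single r 1) =
      fun v => ∑ u ∈ (if v = r then {r} else G.neighborFinset v),
        (if v = r then Pi.single r 1 else Pi.single v 1 - Pi.single u 1 : V → ℝ) := by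
    funext v
    by_cases hv : v = r
    · subst hv; simp
    · simp only [if_neg hv]
      rw [Matrix.updateRow_ne hv]
      funext w
      simp only [SimpleGraph.lapMatrix, Matrix.sub_apply, SimpleGraph.degMatrix,
        SimpleGraph.adjMatrix_apply, Finset.sum_apply, Pi.sub_apply, Finset.sum_sub_distrib,
        Matrix.diagonal_apply, Finset.sum_const, Pi.single_apply, Finset.sum_ite_eq,
        SimpleGraph.mem_neighborFinset, SimpleGraph.card_neighborFinset_eq_degree]
      by_cases hw : v = w
      · subst hw; simp
      · simp [hw, Ne.symm hw]
  rw [key]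
  have := MultilinearMap.map_sum_finset (Matrix.detRowAlternating (R := ℝ) (n := V)).toMultilinearMap
    (fun v u => (if v = r then Pi.single r 1 else Pi.single v 1 - Pi.single u 1 : V → ℝ))
    (fun v => if v = r then {r} else G.neighborFinset v)
  refine Eq.trans this ?_
  rw [parents, Finset.card_filter]
  push_cast
  refine Finset.sum_congr rfl fun f hf => ?_
  have hfr : f r = r := by
    have := Fintype.mem_piFinset.1 hf r
    simpa using this
  change (fMat r f).det = _
  split_ifs with h
  · exact det_fMat_one r f h
  · exact det_fMat_zero r f hfr h

/-- graph of parent function -/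
def fGraph (f : V → V) : SimpleGraph V := SimpleGraph.fromRel (fun a b => b = f a)

lemma fGraph_connected (r : V) (f : V → V) (h : ∀ v, ∃ k : ℕ, f^[k] v = r) :
    (fGraph f).Connected := by
  have h1 : ∀ k v, f^[k] v = r → (fGraph f).Reachable v r := by
    intro k
    induction k with
    | zero => intro v hv; cases hv; rfl
    | succ k ih =>
      intro v hv
      rw [Function.iterate_succ_apply] at hv
      have := ih _ hv
      by_cases hvf : v = f v
      · rw [← hvf] at this; exact this
      · refine SimpleGraph.Reachable.trans (SimpleGraph.Adj.reachable ?_) this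
        simp [fGraph, hvf]
  have h2 : ∀ v, (fGraph f).Reachable v r := fun v => (h v).elim fun k hk => h1 k v hk
  have : Nonempty V := ⟨r⟩
  exact ⟨fun u v => (h2 u).trans (h2 v).symm⟩

lemma fGraph_tree (r : V) (f : V → V) (hr : f r = r) (h : ∀ v, ∃ k : ℕ, f^[k] v = r) :
    (fGraph f).IsTree := by
  classical
  have hc := fGraph_connected r f h
  rw [SimpleGraph.isTree_iff_connected_and_card]
  refine ⟨hc, le_antisymm ?_ hc.card_vert_le_card_edgeSet_add_one⟩
  have hsub : (fGraph f).edgeSet ⊆ ((univ.erase r).image (fun v => s(v, f v)) : Finset (Sym2 V)) := by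
    intro e
    induction e using Sym2.ind with
    | _ a b =>
      intro hab
      simp only [SimpleGraph.mem_edgeSet, fGraph, SimpleGraph.fromRel_adj] at hab
      simp only [coe_image, Set.mem_image, mem_coe, mem_erase, mem_univ, and_true]
      obtain ⟨hne, h1 | h1⟩ := hab
      · refine ⟨a, ?_, by rw [h1]⟩
        rintro rfl; exact hne (by rw [h1, hr])
      · refine ⟨b, ?_, by rw [h1, Sym2.eq_swap]⟩
        rintro rfl; exact hne (by rw [h1, hr])
  have h3 : Nat.card (fGraph f).edgeSet ≤ (univ.erase r).card := by
    rw [Nat.card_coe_set_eq]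
    refine (Set.ncard_le_ncard hsub (Finset.finite_toSet _)).trans ?_
    rw [Set.ncard_coe_finset]
    exact Finset.card_image_le
  rw [Finset.card_erase_of_mem (mem_univ r), Finset.card_univ] at h3
  have : 0 < Fintype.card V := Fintype.card_pos_iff.2 ⟨r⟩
  rw [Nat.card_eq_fintype_card (α := V)]
  omega

lemma parents_card (r : V) : (parents G r).card = Set.ncard {T : SimpleGraph V | T ≤ G ∧ T.IsTree} := by
  classical
  rw [← Set.ncard_coe_finset]
  refine Set.ncard_congr (fun f _ => fGraph f) ?_ ?_ ?_
  · intro f hf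
    obtain ⟨hr, hadj, h⟩ := (mem_parents G).1 hf
    refine ⟨?_, fGraph_tree r f hr h⟩
    intro a b hab
    simp only [fGraph, SimpleGraph.fromRel_adj] at hab
    obtain ⟨hne, h1 | h1⟩ := hab
    · rw [h1]; refine hadj a ?_
      rintro rfl; exact hne (by rw [h1, hr])
    · rw [h1]; refine (hadj b ?_).symm
      rintro rfl; exact hne (by rw [h1, hr])
  · intro f g hf hg hfg
    obtain ⟨hfr, hfadj, hfk⟩ := (mem_parents G).1 hf
    obtain ⟨hgr, hgadj, hgk⟩ := (mem_parents G).1 hg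
    have key : ∀ k v, f^[k] v = r → f v = g v := by
      intro k
      induction k with
      | zero =>
        intro v hv
        have hv' : v = r := hv
        rw [hv', hfr, hgr]
      | succ k ih =>
        intro v hv
        rw [Function.iterate_succ_apply] at hv
        have h1 := ih _ hv
        by_cases hvr : v = r
        · rw [hvr, hfr, hgr]
        have h2 : (fGraph f).Adj v (f v) := by
          simp [fGraph, (hfadj v hvr).ne]
        have hfg' : fGraph f = fGraph g := hfg
        rw [hfg'] at h2
        simp only [fGraph, SimpleGraph.fromRel_adj] at h2
        obtain ⟨_, h3 | h3⟩ := h2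
        · exact h3
        · exfalso
          rw [← h1] at h3
          have h4 : ∀ j, f^[j] v = v ∨ f^[j] v = f v := by
            intro j
            induction j with
            | zero => left; rfl
            | succ j ihj =>
              rw [Function.iterate_succ_apply']
              rcases ihj with h | h
              · right; rw [h]
              · left; rw [h]; exact h3.symm
          obtain ⟨j, hj⟩ := hfk v
          rcases h4 j with h | h
          · exact hvr (h.symm.trans hj)
          · have : f v = r := h.symm.trans hj
            rw [this, hfr] at h3
            exact hvr h3
    funext v
    obtain ⟨k, hk⟩ := hfk v
    exact key k v hk
  · rintro T ⟨hTG, hT⟩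
    have hex : ∀ v, ∃ u, v ≠ r → T.Adj v u ∧ T.dist u r + 1 = T.dist v r := by
      intro v
      obtain ⟨p, hp⟩ := hT.connected.exists_walk_length_eq_dist v r
      cases p with
      | nil => exact ⟨r, fun h => absurd rfl h⟩
      | @cons _ u _ huv q =>
        refine ⟨u, fun _ => ⟨huv, ?_⟩⟩
        rw [SimpleGraph.Walk.length_cons] at hp
        have h1 : T.dist u r ≤ q.length := SimpleGraph.dist_le q
        obtain ⟨q', hq'⟩ := hT.connected.exists_walk_length_eq_dist u r
        have h2 : T.dist v r ≤ (SimpleGraph.Walk.cons huv q').length := SimpleGraph.dist_le _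
        rw [SimpleGraph.Walk.length_cons] at h2
        omega
    choose f0 hf0 using hex
    let f : V → V := fun v => if v = r then r else f0 v
    have hfr : f r = r := by simp [f]
    have hfv : ∀ v, v ≠ r → T.Adj v (f v) ∧ T.dist (f v) r + 1 = T.dist v r := by
      intro v hv
      simp only [f, if_neg hv]
      exact hf0 v hv
    have hk : ∀ n v, T.dist v r = n → ∃ k : ℕ, f^[k] v = r := by
      intro n
      induction n with
      | zero =>
        intro v hv
        exact ⟨0, hT.connected.dist_eq_zero_iff.1 hv⟩
      | succ n ih =>
        intro v hv
        by_cases hvr : v = r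
        · exact ⟨0, hvr⟩
        · obtain ⟨k, hk⟩ := ih (f v) (by have := (hfv v hvr).2; omega)
          exact ⟨k+1, by rw [Function.iterate_succ_apply]; exact hk⟩
    have hk' : ∀ v, ∃ k : ℕ, f^[k] v = r := fun v => hk _ v rfl
    have hle : fGraph f ≤ T := by
      intro a b hab
      simp only [fGraph, SimpleGraph.fromRel_adj] at hab
      obtain ⟨hne, h1 | h1⟩ := hab
      · rw [h1]; refine (hfv a ?_).1
        rintro rfl; exact hne (by rw [h1, hfr])
      · rw [h1]; refine (hfv b ?_).1.symm
        rintro rfl; exact hne (by rw [h1, hfr])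
    refine ⟨f, ?_, ?_⟩
    · exact (mem_parents G).2 ⟨hfr, fun v hv => hTG (hfv v hv).1, hk'⟩
    · exact le_antisymm hle ((SimpleGraph.isTree_iff_minimal_connected.1 hT).le_of_le
        (fGraph_connected r f hk') hle)

lemma ncard_subgraph : Set.ncard {H : G.Subgraph | H.IsSpanning ∧ H.coe.IsTree} =
    Set.ncard {T : SimpleGraph V | T ≤ G ∧ T.IsTree} := by
  refine Set.ncard_congr (fun H _ => H.spanningCoe) ?_ ?_ ?_
  · rintro H ⟨hs, ht⟩
    exact ⟨H.spanningCoe_le, (SimpleGraph.Iso.isTree_iff (H.spanningCoeEquivCoeOfSpanning hs)).2 ht⟩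
  · rintro H K ⟨hs, _⟩ ⟨ks, _⟩ h
    refine SimpleGraph.Subgraph.ext ?_ (SimpleGraph.Subgraph.spanningCoe_inj.1 h)
    rw [SimpleGraph.Subgraph.isSpanning_iff.1 hs, SimpleGraph.Subgraph.isSpanning_iff.1 ks]
  · rintro T ⟨hT, ht⟩
    have hs := SimpleGraph.toSubgraph.isSpanning T hT
    refine ⟨SimpleGraph.toSubgraph T hT, ⟨hs, ?_⟩, ?_⟩
    · rw [← (SimpleGraph.Iso.isTree_iff (SimpleGraph.Subgraph.spanningCoeEquivCoeOfSpanning _ hs))]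
      exact ht
    · rfl

lemma trace_adj : (G.lapMatrix ℝ).adjugate.trace =
    Fintype.card V * (Set.ncard {H : G.Subgraph | H.IsSpanning ∧ H.coe.IsTree} : ℝ) := by
  rw [Matrix.trace]
  simp only [Matrix.diag_apply, adj_lap, parents_card, ncard_subgraph]
  simp

end MTT
end Bal
namespace Bal
open Finset

section Spec

lemma trace_adj_diag {V : Type*} [Fintype V] [DecidableEq V] (L W : Matrix V V ℝ) (d : V → ℝ)
    (hW : W.det ≠ 0) (h : L * W = W * Matrix.diagonal d) :
    L.adjugate.trace = ∑ k, ∏ j ∈ univ.erase k, d j := by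
  have h1 : W.adjugate * L.adjugate = (Matrix.diagonal d).adjugate * W.adjugate := by
    rw [← Matrix.adjugate_mul_distrib, h, Matrix.adjugate_mul_distrib]
  have h2 : W.det • L.adjugate = W * ((Matrix.diagonal d).adjugate * W.adjugate) := by
    rw [← h1, ← Matrix.mul_assoc, Matrix.mul_adjugate, Matrix.smul_mul, Matrix.one_mul]
  have h3 := congrArg Matrix.trace h2
  rw [Matrix.trace_mul_comm, Matrix.mul_assoc, Matrix.adjugate_mul, Matrix.mul_smul, Matrix.mul_one,
    Matrix.trace_smul, Matrix.trace_smul, smul_eq_mul, smul_eq_mul] at h3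
  rw [mul_left_cancel₀ hW h3, Matrix.adjugate_diagonal, Matrix.trace_diagonal]

/-- path eigenvector -/
noncomputable def pv (n : ℕ) (k : ℝ) (i : ℕ) : ℝ := Real.cos (i * (2 * k + 1) * Real.pi / (2 * n))

/-- path eigenvalue -/
noncomputable def ev (n : ℕ) (i : ℕ) : ℝ := 2 - 2 * Real.cos (i * Real.pi / n)

lemma pv_rec (n : ℕ) (hn : 0 < n) (k : ℝ) (i : ℕ) :
    (pv n k i - pv n (k+1) i) + (pv n k i - pv n (k-1) i) = ev n i * pv n k i := by
  have hn' : (n : ℝ) ≠ 0 := by positivity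
  unfold pv ev
  have e1 : (i : ℝ) * (2 * (k+1) + 1) * Real.pi / (2 * n) =
    i * (2 * k + 1) * Real.pi / (2 * n) + i * Real.pi / n := by field_simp; ring
  have e2 : (i : ℝ) * (2 * (k-1) + 1) * Real.pi / (2 * n) =
    i * (2 * k + 1) * Real.pi / (2 * n) - i * Real.pi / n := by field_simp; ring
  rw [e1, e2, Real.cos_add, Real.cos_sub]
  ring

lemma pv_left (n i : ℕ) : pv n (0 - 1) i = pv n 0 i := by
  unfold pv
  rw [← Real.cos_neg]; congr 1; ring

lemma pv_right (n : ℕ) (hn : 0 < n) (k : ℝ) (hk : k + 1 = n) (i : ℕ) : pv n (k + 1) i = pv n k i := by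
  have hn' : (n : ℝ) ≠ 0 := by positivity
  unfold pv
  rw [← Real.cos_neg, ← Real.cos_add_nat_mul_two_pi _ i]; congr 1
  obtain rfl : k = n - 1 := by linarith
  field_simp; ring

lemma path_lap (n : ℕ) [DecidableRel (SimpleGraph.pathGraph n).Adj] (i : ℕ) (k : Fin n) :
    ∑ u ∈ (SimpleGraph.pathGraph n).neighborFinset k, (pv n (k : ℕ) i - pv n (u : ℕ) i)
      = ev n i * pv n (k : ℕ) i := by
  have hn : 0 < n := k.pos
  rw [← pv_rec n hn]
  have hs : (SimpleGraph.pathGraph n).neighborFinset k =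
      (univ.filter (fun u : Fin n => (k : ℕ) + 1 = u)) ∪
      (univ.filter (fun u : Fin n => (u : ℕ) + 1 = k)) := by
    ext u; simp [SimpleGraph.pathGraph_adj]
  rw [hs, sum_union]
  · congr 1
    · by_cases hk : (k : ℕ) + 1 < n
      · have : (univ.filter (fun u : Fin n => (k : ℕ) + 1 = u)) = {⟨(k : ℕ) + 1, hk⟩} := by
          ext u; simp [Fin.ext_iff, eq_comm]
        rw [this, sum_singleton]; simp
      · have : (univ.filter (fun u : Fin n => (k : ℕ) + 1 = u)) = ∅ := by
          ext u; have := u.2; simp; omega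
        rw [this, sum_empty, pv_right n hn]; · simp
        have := k.2
        have h2 : (k : ℕ) + 1 = n := by omega
        exact_mod_cast h2
    · by_cases hk : 0 < (k : ℕ)
      · have : (univ.filter (fun u : Fin n => (u : ℕ) + 1 = k)) = {⟨(k : ℕ) - 1, by omega⟩} := by
          ext u; simp [Fin.ext_iff]; omega
        rw [this, sum_singleton]
        simp only
        rw [Nat.cast_sub hk]; simp
      · have : (univ.filter (fun u : Fin n => (u : ℕ) + 1 = k)) = ∅ := by
          ext u; simp; omega
        have h0 : (k : ℕ) = 0 := by omega
        rw [this, sum_empty, h0, Nat.cast_zero, pv_left]; simp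
  · rw [Finset.disjoint_left]
    intro u; simp; omega

lemma lap_mulVec {V : Type*} [Fintype V] [DecidableEq V] (G : SimpleGraph V) [DecidableRel G.Adj]
    (x : V → ℝ) (v : V) : (G.lapMatrix ℝ).mulVec x v = ∑ u ∈ G.neighborFinset v, (x v - x u) := by
  rw [SimpleGraph.lapMatrix_mulVec_apply]
  simp [sum_sub_distrib]

lemma ev_inj (n : ℕ) : Function.Injective (fun i : Fin n => ev n i) := by
  intro i j hij
  have hn : 0 < n := i.pos
  have hn' : (0:ℝ) < n := by positivity
  simp only [ev] at hij
  have hmem : ∀ a : Fin n, ((a : ℕ) : ℝ) * Real.pi / n ∈ Set.Icc 0 Real.pi := by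
    intro a
    have : ((a : ℕ) : ℝ) ≤ n := by exact_mod_cast a.2.le
    refine ⟨by positivity, ?_⟩
    rw [div_le_iff₀ hn', mul_comm]
    gcongr
  have h1 := Real.injOn_cos (hmem i) (hmem j) (by linarith)
  have hpi := Real.pi_pos
  field_simp at h1
  exact Fin.ext (by exact_mod_cast h1)

/-- path eigenvector matrix -/
noncomputable def pW (n : ℕ) : Matrix (Fin n) (Fin n) ℝ := fun k i => pv n (k : ℕ) (i : ℕ)

lemma pW_det (n : ℕ) : (pW n).det ≠ 0 := by
  classical
  rcases Nat.eq_zero_or_pos n with rfl | hn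
  · simp
  have hli : LinearIndependent ℝ (pW n).col := by
    refine Module.End.eigenvectors_linearIndependent'
      (Matrix.toLin' ((SimpleGraph.pathGraph n).lapMatrix ℝ)) (fun i : Fin n => ev n i) (ev_inj n) _ ?_
    intro i
    rw [Module.End.hasEigenvector_iff]
    constructor
    · rw [Module.End.mem_eigenspace_iff, Matrix.toLin'_apply]
      funext k
      rw [lap_mulVec]
      exact path_lap n i k
    · intro h0
      have := congrFun h0 ⟨0, hn⟩
      simp only [Matrix.col, Matrix.transpose_apply, pW, pv, Pi.zero_apply] at this
      refine absurd this (ne_of_gt (Real.cos_pos_of_mem_Ioo ⟨?_, ?_⟩))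
      · have := Real.pi_pos
        refine lt_of_lt_of_le (b := 0) (by linarith) (by positivity)
      · have hpi := Real.pi_pos
        have hn' : (0:ℝ) < n := by positivity
        have : ((i : ℕ) : ℝ) < n := by exact_mod_cast i.2
        rw [div_lt_div_iff₀ (by positivity) (by positivity)]
        simp
        nlinarith
  rw [Matrix.linearIndependent_cols_iff_isUnit, Matrix.isUnit_iff_isUnit_det] at hli
  exact hli.ne_zero

lemma box_lap (l m : ℕ) [DecidableRel ((SimpleGraph.pathGraph l).boxProd (SimpleGraph.pathGraph m)).Adj] :
    ((SimpleGraph.pathGraph l).boxProd (SimpleGraph.pathGraph m)).lapMatrix ℝ *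
      (Matrix.kroneckerMap (· * ·) (pW l) (pW m)) = (Matrix.kroneckerMap (· * ·) (pW l) (pW m)) *
      Matrix.diagonal (fun p : Fin l × Fin m => ev l (p.1 : ℕ) + ev m (p.2 : ℕ)) := by
  classical
  ext ⟨a, b⟩ ⟨i, j⟩
  rw [Matrix.mul_diagonal]
  have : (((SimpleGraph.pathGraph l).boxProd (SimpleGraph.pathGraph m)).lapMatrix ℝ *
      (Matrix.kroneckerMap (· * ·) (pW l) (pW m))) (a, b) (i, j) =
      (((SimpleGraph.pathGraph l).boxProd (SimpleGraph.pathGraph m)).lapMatrix ℝ).mulVec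
      (fun p => pv l (p.1 : ℕ) i * pv m (p.2 : ℕ) j) (a, b) := rfl
  rw [this, lap_mulVec]
  refine (Finset.sum_congr (s₂ := ((SimpleGraph.pathGraph l).neighborFinset a ×ˢ {b}) ∪
      ({a} ×ˢ (SimpleGraph.pathGraph m).neighborFinset b)) ?_ (fun _ _ => rfl)).trans ?_
  · ext ⟨u, v⟩
    simp only [SimpleGraph.mem_neighborFinset, SimpleGraph.boxProd_adj, mem_union, mem_product,
      mem_singleton]
    tauto
  rw [sum_union]
  · rw [sum_product, sum_product]
    simp only [sum_singleton, Matrix.kroneckerMap_apply, pW]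
    have e1 := path_lap l i a
    have e2 := path_lap m j b
    rw [mul_add]
    have e3 : ∀ x ∈ (SimpleGraph.pathGraph l).neighborFinset a,
      pv l (a : ℕ) i * pv m (b : ℕ) j - pv l (x : ℕ) i * pv m (b : ℕ) j
      = (pv l (a : ℕ) i - pv l (x : ℕ) i) * pv m (b : ℕ) j := fun x _ => by ring
    have e4 : ∀ x ∈ (SimpleGraph.pathGraph m).neighborFinset b,
      pv l (a : ℕ) i * pv m (b : ℕ) j - pv l (a : ℕ) i * pv m (x : ℕ) j
      = pv l (a : ℕ) i * (pv m (b : ℕ) j - pv m (x : ℕ) j) := fun x _ => by ring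
    rw [sum_congr rfl e3, sum_congr rfl e4, ← sum_mul, ← mul_sum, e1, e2]
    ring
  · rw [Finset.disjoint_left]
    rintro ⟨u, v⟩ h1 h2
    simp only [mem_product, SimpleGraph.mem_neighborFinset, mem_singleton] at h1 h2
    rw [h2.1] at h1
    exact h1.1.ne rfl

lemma ev_zero (n : ℕ) : ev n 0 = 0 := by simp [ev]

lemma tau_prod (l m : ℕ) : ((l + 1 : ℕ) : ℝ) * ((m + 1 : ℕ) : ℝ) * (gridTau (l+1) (m+1) : ℝ) =
    (∏ j ∈ range m, ev (m+1) (j+1)) * ∏ i ∈ range l, (ev (l+1) (i+1) *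
      ∏ j ∈ range m, (ev (l+1) (i+1) + ev (m+1) (j+1))) := by
  classical
  have h := trace_adj ((SimpleGraph.pathGraph (l+1)).boxProd (SimpleGraph.pathGraph (m+1)))
  have hdet : (Matrix.kroneckerMap (· * ·) (pW (l+1)) (pW (m+1))).det ≠ 0 := by
    have := Matrix.det_kronecker (pW (l+1)) (pW (m+1))
    rw [show (Matrix.kroneckerMap (· * ·) (pW (l+1)) (pW (m+1))).det = _ from this]
    exact mul_ne_zero (pow_ne_zero _ (pW_det _)) (pow_ne_zero _ (pW_det _))
  rw [trace_adj_diag _ _ _ hdet (box_lap (l+1) (m+1))] at h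
  have hcard : (Fintype.card (Fin (l+1) × Fin (m+1)) : ℝ) = ((l + 1 : ℕ) : ℝ) * ((m + 1 : ℕ) : ℝ) := by
    simp
  rw [hcard] at h
  refine Eq.trans h.symm ?_
  rw [Finset.sum_eq_single (0, 0)]
  · have : ∀ g : Fin (l+1) × Fin (m+1) → ℝ, ∏ p ∈ univ.erase (0,0), g p =
        ∏ p, if p = (0,0) then 1 else g p := by
      intro g
      rw [← Finset.mul_prod_erase univ _ (mem_univ (0,0))]
      simp only [if_true, one_mul]
      refine prod_congr rfl fun p hp => ?_
      rw [if_neg (Finset.ne_of_mem_erase hp)]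
    rw [this, Fintype.prod_prod_type, Fin.prod_univ_succ]
    simp only [Fin.prod_univ_succ, Prod.mk.injEq]
    simp [Fin.succ_ne_zero, ev_zero, Finset.prod_range]
  · intro p _ hp
    apply Finset.prod_eq_zero (i := (0,0))
    · simp [Ne.symm hp]
    · simp [ev_zero]
  · simp

open Polynomial in
lemma cheb_prod (n : ℕ) (y : ℝ) : ∏ k ∈ range n, (2 * y - 2 * Real.cos (((k:ℝ)+1) * Real.pi / (n+1))) =
    (Polynomial.Chebyshev.U ℝ n).eval y := by
  have hinj := (Finset.range n).nodup_map_iff_injOn.mp (Polynomial.Chebyshev.roots_U_real_nodup n)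
  have hsp : (Polynomial.Chebyshev.U ℝ n).roots.card = (Polynomial.Chebyshev.U ℝ n).natDegree := by
    rw [Polynomial.Chebyshev.roots_U_real, Polynomial.Chebyshev.natDegree_U_natCast,
      Finset.card_val, Finset.card_image_of_injOn hinj, card_range]
  have := Polynomial.C_leadingCoeff_mul_prod_multiset_X_sub_C hsp
  rw [← this, Polynomial.Chebyshev.roots_U_real, Polynomial.Chebyshev.leadingCoeff_U_natCast]
  rw [eval_mul, eval_C, eval_multiset_prod, Multiset.map_map]
  change _ = _ * ∏ x ∈ image _ _, _
  rw [Finset.prod_image hinj]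
  have h2 : (2:ℝ)^n = ∏ k ∈ range n, (2:ℝ) := by simp
  rw [h2, ← prod_mul_distrib]
  refine prod_congr rfl fun k _ => ?_
  simp [mul_sub]

lemma ev_prod (n : ℕ) : ∏ j ∈ range n, ev (n+1) (j+1) = n + 1 := by
  have := cheb_prod n 1
  rw [Polynomial.Chebyshev.U_eval_one] at this
  simp only [ev]
  push_cast at *
  simpa using this

lemma tau_eq (l m : ℕ) : (gridTau (l+1) (m+1) : ℝ) =
    ∏ i ∈ range l, (Polynomial.Chebyshev.U ℝ m).eval
      (2 - Real.cos (((i:ℝ)+1) * Real.pi / (l+1))) := by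
  have h := tau_prod l m
  rw [prod_mul_distrib, ev_prod, ev_prod, ← mul_assoc] at h
  have h1 : ((m:ℝ)+1) * (l+1) ≠ 0 := by positivity
  have h2 : ((m:ℝ)+1) * (l+1) * (gridTau (l+1) (m+1) : ℝ) = ((m:ℝ)+1) * (l+1) *
    ∏ i ∈ range l, ∏ j ∈ range m, (ev (l+1) (i+1) + ev (m+1) (j+1)) := by
    rw [← h]; push_cast; ring
  rw [mul_left_cancel₀ h1 h2]
  refine prod_congr rfl fun i _ => ?_
  rw [← cheb_prod]
  refine prod_congr rfl fun j _ => ?_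
  simp only [ev]
  push_cast
  ring

end Spec
end Bal
namespace Bal
open Finset

section Analysis

/-- the dispersion function -/
noncomputable def th (x : ℝ) : ℝ := 2 * Real.arsinh (Real.sin (x / 2))

lemma th_cont : Continuous th := by
  unfold th
  exact continuous_const.mul (Real.continuous_arsinh.comp (Real.continuous_sin.comp (by fun_prop)))

lemma th_deriv (x : ℝ) : HasDerivAt th (Real.cos (x/2) / √(1 + Real.sin (x/2)^2)) x := by
  unfold th
  have h1 : HasDerivAt (fun x : ℝ => x / 2) (1/2) x := (hasDerivAt_id x).div_const 2
  have h2 := (h1.sin).arsinh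
  have h3 := h2.const_mul 2
  have e : 2 * ((√(1 + Real.sin (x / 2) ^ 2))⁻¹ • (Real.cos (x / 2) * (1 / 2))) =
      Real.cos (x/2) / √(1 + Real.sin (x/2)^2) := by
    rw [smul_eq_mul]
    ring
  rw [← e]
  exact h3

lemma th_concave : ConcaveOn ℝ (Set.Icc 0 Real.pi) th := by
  refine AntitoneOn.concaveOn_of_deriv (convex_Icc _ _) th_cont.continuousOn
    (fun x _ => (th_deriv x).differentiableAt.differentiableWithinAt) ?_
  intro x hx y hy hxy
  rw [interior_Icc] at hx hy
  rw [(th_deriv x).deriv, (th_deriv y).deriv]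
  have hpi := Real.pi_pos
  have hs : Real.sin (x/2) ≤ Real.sin (y/2) :=
    Real.sin_le_sin_of_le_of_le_pi_div_two (by linarith [hx.1]) (by linarith [hy.2]) (by linarith)
  have hs0 : 0 ≤ Real.sin (x/2) :=
    Real.sin_nonneg_of_nonneg_of_le_pi (by linarith [hx.1]) (by linarith [hx.2])
  have hc : Real.cos (y/2) ≤ Real.cos (x/2) :=
    Real.cos_le_cos_of_nonneg_of_le_pi (by linarith [hx.1]) (by linarith [hy.2]) (by linarith)
  have hc0 : 0 ≤ Real.cos (x/2) :=
    Real.cos_nonneg_of_mem_Icc ⟨by linarith [hx.1], by linarith [hx.2]⟩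
  have h1 : 0 < 1 + Real.sin (x/2)^2 := by positivity
  apply div_le_div₀ hc0 hc (Real.sqrt_pos.2 h1)
  apply Real.sqrt_le_sqrt
  gcongr

lemma th_zero : th 0 = 0 := by simp [th]

/-- value at pi -/
noncomputable def al : ℝ := th Real.pi

lemma al_eq : al = 2 * Real.arsinh 1 := by simp [al, th]

lemma exp_al : Real.exp (-al) = (√2 - 1)^2 := by
  have h1 : Real.exp (Real.arsinh 1) = 1 + √2 := by
    rw [Real.exp_arsinh]; norm_num
  have h2 : Real.exp (- Real.arsinh 1) = √2 - 1 := by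
    rw [Real.exp_neg, h1]
    have : √2 * √2 = 2 := Real.mul_self_sqrt (by norm_num)
    rw [inv_eq_iff_eq_inv, eq_comm, inv_eq_of_mul_eq_one_left]
    nlinarith
  rw [al_eq, show -(2 * Real.arsinh 1) = -Real.arsinh 1 + -Real.arsinh 1 by ring, Real.exp_add, h2]
  ring

lemma al_lower : 7/4 ≤ al := by
  rw [al_eq]
  have h1 : Real.exp (Real.arsinh 1) = 1 + √2 := by
    rw [Real.exp_arsinh]; norm_num
  have h3 : (1.414:ℝ) ≤ √2 := Real.le_sqrt_of_sq_le (by norm_num)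
  have : Real.exp (7/8) ≤ Real.exp (Real.arsinh 1) := by
    rw [h1]
    have h2 : Real.exp (7/8) ^ 8 ≤ (2.414:ℝ)^8 := by
      rw [← Real.exp_nat_mul]
      have : ((8:ℕ):ℝ) * (7/8) = (7:ℕ) * 1 := by norm_num
      rw [this, Real.exp_nat_mul]
      calc Real.exp 1 ^ 7 ≤ 2.7182818286 ^ 7 := by
            gcongr; exact Real.exp_one_lt_d9.le
        _ ≤ _ := by norm_num
    have h4 := le_of_pow_le_pow_left₀ (by norm_num) (by norm_num) h2
    linarith
  have := Real.exp_le_exp.1 this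
  linarith

lemma q_upper : Real.exp (-2 * al) ≤ 0.03 := by
  have : Real.exp (-2 * al) = Real.exp (-al) * Real.exp (-al) := by rw [← Real.exp_add]; ring_nf
  rw [this, exp_al]
  have h3 : (1.414:ℝ) ≤ √2 := Real.le_sqrt_of_sq_le (by norm_num)
  have h2 : √2 * √2 = 2 := Real.mul_self_sqrt (by norm_num)
  nlinarith

lemma th_le_self (x : ℝ) (hx : 0 ≤ x) : th x ≤ x := by
  unfold th
  have h1 : Real.sin (x/2) ≤ x/2 := Real.sin_le (by linarith)
  have h2 : Real.arsinh (Real.sin (x/2)) ≤ Real.arsinh (x/2) := Real.arsinh_le_arsinh.2 h1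
  have h3 : Real.arsinh (x/2) ≤ x/2 := by
    rw [← Real.sinh_le_sinh, Real.sinh_arsinh]
    exact Real.self_le_sinh_iff.2 (by linarith)
  linarith

lemma th_le_al (x : ℝ) : th x ≤ al := by
  rw [al_eq]
  unfold th
  have := Real.arsinh_le_arsinh.2 (Real.sin_le_one (x/2))
  linarith

lemma th_lower (x : ℝ) (hx : 0 ≤ x) (hx1 : x ≤ 1) : al * x ≤ th (x * Real.pi) := by
  have hpi := Real.pi_pos
  have := th_concave.2 (Set.left_mem_Icc.2 hpi.le) (Set.right_mem_Icc.2 hpi.le)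
    (show 0 ≤ 1 - x by linarith) hx (by ring)
  simp only [smul_eq_mul, mul_zero, zero_add, th_zero] at this
  rw [mul_comm]
  exact this

lemma cosh_th (x : ℝ) : Real.cosh (th x) = 2 - Real.cos x := by
  unfold th
  rw [Real.cosh_two_mul, Real.cosh_sq, Real.sinh_arsinh]
  have : Real.cos x = 1 - 2 * Real.sin (x/2)^2 := by
    conv_lhs => rw [show x = 2 * (x/2) by ring, Real.cos_two_mul, Real.cos_sq']
    ring
  rw [this]; ring

lemma int_sym (f : ℝ → ℝ) (hf : Continuous f) (a b : ℝ) :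
    2 * ∫ x in a..b, f x = ∫ x in a..b, (f x + f (a + b - x)) := by
  have hf2 : Continuous fun x : ℝ => f (a + b - x) :=
    hf.comp (by fun_prop : Continuous fun x : ℝ => a + b - x)
  rw [intervalIntegral.integral_add (hf.intervalIntegrable _ _) (hf2.intervalIntegrable _ _)]
  rw [intervalIntegral.integral_comp_sub_left]
  simp
  ring

lemma hh_lower {a b : ℝ} (ha : 0 ≤ a) (hab : a ≤ b) (hb : b ≤ Real.pi) :
    (b - a) * (th a + th b) / 2 ≤ ∫ x in a..b, th x := by
  have h := int_sym th th_cont a b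
  have h2 : ∫ x in a..b, (th a + th b) ≤ ∫ x in a..b, (th x + th (a + b - x)) := by
    apply intervalIntegral.integral_mono_on hab
    · simp
    · exact (th_cont.add (th_cont.comp (by fun_prop : Continuous fun x : ℝ => a + b - x))).intervalIntegrable _ _
    · intro x hx
      rcases eq_or_lt_of_le hab with h | h
      · subst h
        have : x = a := le_antisymm hx.2 hx.1
        subst this; simp
      · have hba : 0 < b - a := by linarith
        have hA : a ∈ Set.Icc 0 Real.pi := ⟨ha, by linarith⟩
        have hB : b ∈ Set.Icc 0 Real.pi := ⟨by linarith, hb⟩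
        have c0 : 0 ≤ (x - a)/(b - a) := div_nonneg (by linarith [hx.1]) hba.le
        have c1 : 0 ≤ (b - x)/(b - a) := div_nonneg (by linarith [hx.2]) hba.le
        have cs : (x - a)/(b - a) + (b - x)/(b - a) = 1 := by field_simp; ring
        have k1 := th_concave.2 hB hA c0 c1 cs
        have k2 := th_concave.2 hA hB c0 c1 cs
        simp only [smul_eq_mul] at k1 k2
        have e1 : (x - a)/(b - a) * b + (b - x)/(b - a) * a = x := by field_simp; ring
        have e2 : (x - a)/(b - a) * a + (b - x)/(b - a) * b = a + b - x := by field_simp; ring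
        rw [e1] at k1
        rw [e2] at k2
        have e3 : th a + th b = ((x - a)/(b - a) + (b - x)/(b - a)) * (th a + th b) := by
          rw [cs, one_mul]
        rw [e3]
        nlinarith
  rw [intervalIntegral.integral_const, smul_eq_mul] at h2
  linarith

lemma hh_upper {a b : ℝ} (ha : 0 ≤ a) (hab : a ≤ b) (hb : b ≤ Real.pi) :
    ∫ x in a..b, th x ≤ (b - a) * th ((a + b)/2) := by
  have h := int_sym th th_cont a b
  have h2 : ∫ x in a..b, (th x + th (a + b - x)) ≤ ∫ x in a..b, (2 * th ((a+b)/2)) := by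
    apply intervalIntegral.integral_mono_on hab
    · exact (th_cont.add (th_cont.comp (by fun_prop : Continuous fun x : ℝ => a + b - x))).intervalIntegrable _ _
    · simp
    · intro x hx
      have hA : x ∈ Set.Icc 0 Real.pi := ⟨by linarith [hx.1], by linarith [hx.2]⟩
      have hB : a + b - x ∈ Set.Icc 0 Real.pi := ⟨by linarith [hx.2], by linarith [hx.1]⟩
      have k1 := th_concave.2 hA hB (show (0:ℝ) ≤ 1/2 by norm_num) (show (0:ℝ) ≤ 1/2 by norm_num)
        (by norm_num)
      simp only [smul_eq_mul] at k1
      have e1 : 1/2 * x + 1/2 * (a + b - x) = (a+b)/2 := by ring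
      rw [e1] at k1
      linarith
  rw [intervalIntegral.integral_const, smul_eq_mul] at h2
  linarith

/-- sum of th at interior nodes -/
noncomputable def S (l : ℕ) : ℝ := ∑ i ∈ range l, th (((i:ℝ)+1) * Real.pi / (l+1))

/-- integral of th -/
noncomputable def J : ℝ := ∫ x in (0:ℝ)..Real.pi, th x

lemma S_upper (l : ℕ) : S l ≤ (l+1) * J / Real.pi - al / 2 := by
  have hpi := Real.pi_pos
  set h : ℝ := Real.pi / (l+1) with hh
  have hpos : 0 < h := by positivity
  have hlh : (l+1) * h = Real.pi := by rw [hh]; field_simp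
  have h1 := intervalIntegral.sum_integral_adjacent_intervals (f := th) (μ := MeasureTheory.volume)
    (a := fun k : ℕ => (k:ℝ) * h) (n := l+1) (fun k _ => th_cont.intervalIntegrable _ _)
  have h2 : ∑ k ∈ range (l+1), (h * (th (k * h) + th (((k+1 : ℕ):ℝ) * h)) / 2) ≤
      ∑ k ∈ range (l+1), ∫ x in ((k:ℝ) * h)..(((k+1 : ℕ):ℝ) * h), th x := by
    refine sum_le_sum fun k hk => ?_
    have hk' : ((k:ℝ)+1) ≤ l+1 := by exact_mod_cast mem_range.1 hk
    have := hh_lower (a := (k:ℝ) * h) (b := ((k+1 : ℕ):ℝ) * h) (by positivity)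
      (by push_cast; nlinarith) (by push_cast; rw [← hlh]; gcongr)
    refine le_trans (le_of_eq ?_) this
    push_cast; ring
  rw [h1] at h2
  have h3 : ∑ k ∈ range (l+1), (h * (th (k * h) + th (((k+1 : ℕ):ℝ) * h)) / 2) = h * (S l + al/2) := by
    have e1 : ∑ k ∈ range (l+1), th (k * h) = S l := by
      rw [sum_range_succ']
      simp only [Nat.cast_zero, zero_mul, th_zero, add_zero, S]
      refine sum_congr rfl fun k _ => ?_
      congr 1; rw [hh]; push_cast; ring
    have e2 : ∑ k ∈ range (l+1), th (((k+1 : ℕ):ℝ) * h) = S l + al := by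
      rw [sum_range_succ]
      congr 1
      · refine sum_congr rfl fun k _ => ?_
        congr 1; rw [hh]; push_cast; ring
      · rw [al]; congr 1; push_cast; exact hlh
    have : ∀ k ∈ range (l+1), (h * (th (k * h) + th (((k+1 : ℕ):ℝ) * h)) / 2) =
      h/2 * th (k*h) + h/2 * th (((k+1 : ℕ):ℝ) * h) := fun k _ => by ring
    rw [sum_congr rfl this, sum_add_distrib, ← mul_sum, ← mul_sum, e1, e2]
    ring
  rw [h3] at h2
  have h4 : ∫ x in (((0:ℕ):ℝ) * h)..(((l+1 : ℕ):ℝ) * h), th x = J := by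
    rw [J]; push_cast; rw [zero_mul, hlh]
  rw [h4] at h2
  have h5 : (l+1) * J / Real.pi = J / h := by rw [hh]; field_simp
  rw [h5, le_sub_iff_add_le, le_div_iff₀ hpos]
  linarith

lemma S_lower (l : ℕ) : (l+1) * J / Real.pi - al / 2 - Real.pi / (8 * (l+1)) ≤ S l := by
  have hpi := Real.pi_pos
  set h : ℝ := Real.pi / (l+1) with hh
  have hpos : 0 < h := by positivity
  have hlh : (l+1) * h = Real.pi := by rw [hh]; field_simp
  have h1 := intervalIntegral.sum_integral_adjacent_intervals (f := th) (μ := MeasureTheory.volume)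
    (a := fun k : ℕ => ((k:ℝ) + 1/2) * h) (n := l) (fun k _ => th_cont.intervalIntegrable _ _)
  have h2 : ∑ k ∈ range l, ∫ x in (((k:ℝ)+1/2) * h)..((((k+1 : ℕ):ℝ)+1/2) * h), th x ≤ h * S l := by
    rw [S, mul_sum]
    refine sum_le_sum fun k hk => ?_
    have hk' : ((k:ℝ)+1) ≤ l := by exact_mod_cast mem_range.1 hk
    have := hh_upper (a := ((k:ℝ)+1/2) * h) (b := (((k+1 : ℕ):ℝ)+1/2) * h) (by positivity)
      (by push_cast; nlinarith) (by push_cast; rw [← hlh]; gcongr; linarith)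
    refine le_trans this (le_of_eq ?_)
    congr 1
    · push_cast; ring
    · congr 1; rw [hh]; push_cast; ring
  rw [h1] at h2
  have h3 : ∫ x in (0:ℝ)..(h/2), th x ≤ h^2/8 := by
    have : ∫ x in (0:ℝ)..(h/2), th x ≤ ∫ x in (0:ℝ)..(h/2), x := by
      apply intervalIntegral.integral_mono_on (by positivity) (th_cont.intervalIntegrable _ _)
        (continuous_id.intervalIntegrable _ _)
      intro x hx
      exact th_le_self x hx.1
    rw [integral_id] at this
    nlinarith
  have h4 : ∫ x in (((l:ℝ)+1/2) * h)..Real.pi, th x ≤ h/2 * al := by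
    have : ∫ x in (((l:ℝ)+1/2) * h)..Real.pi, th x ≤ ∫ x in (((l:ℝ)+1/2) * h)..Real.pi, al := by
      apply intervalIntegral.integral_mono_on (by nlinarith) (th_cont.intervalIntegrable _ _)
        (by simp)
      intro x hx
      exact th_le_al x
    rw [intervalIntegral.integral_const, smul_eq_mul] at this
    refine this.trans (le_of_eq ?_)
    rw [← hlh]; ring
  have h5 : J = (∫ x in (0:ℝ)..(h/2), th x) + (∫ x in (h/2)..(((l:ℝ)+1/2) * h), th x)
      + ∫ x in (((l:ℝ)+1/2) * h)..Real.pi, th x := by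
    rw [J, intervalIntegral.integral_add_adjacent_intervals (th_cont.intervalIntegrable _ _)
      (th_cont.intervalIntegrable _ _), intervalIntegral.integral_add_adjacent_intervals
      (th_cont.intervalIntegrable _ _) (th_cont.intervalIntegrable _ _)]
  have h6 : ∫ x in ((((0:ℕ):ℝ)+1/2) * h)..(((l:ℝ)+1/2) * h), th x =
    (∫ x in (h/2)..(((l:ℝ)+1/2) * h), th x) := by
    congr 1; push_cast; ring
  rw [h6] at h2
  have h7 : (l+1) * J / Real.pi = J / h := by rw [hh]; field_simp
  have h8 : Real.pi / (8 * (l+1)) = h / 8 := by rw [hh]; field_simp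
  rw [h7, h8, sub_sub, sub_le_iff_le_add, div_le_iff₀ hpos]
  nlinarith

end Analysis
end Bal
namespace Bal
open Finset

section Final

lemma log_sinh (y : ℝ) (hy : 0 < y) :
    Real.log (Real.sinh y) = y - Real.log 2 + Real.log (1 - Real.exp (-2 * y)) := by
  have h1 : 0 < 1 - Real.exp (-2 * y) := by
    have : Real.exp (-2 * y) < 1 := by rw [Real.exp_lt_one_iff]; linarith
    linarith
  have h2 : Real.sinh y = Real.exp y / 2 * (1 - Real.exp (-2*y)) := by
    rw [Real.sinh_eq, show -y = y + -2 * y by ring, Real.exp_add]; ring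
  rw [h2, Real.log_mul (by positivity) h1.ne', Real.log_div (by positivity) (by norm_num),
    Real.log_exp]

lemma al_pos : 0 < al := by have := al_lower; linarith

/-- node value -/
noncomputable def nd (l i : ℕ) : ℝ := th (((i:ℝ)+1) * Real.pi / (l+1))

lemma nd_lower {l i : ℕ} (hi : i < l) : al * ((i+1)/(l+1)) ≤ nd l i := by
  have hi' : (i:ℝ) < l := by exact_mod_cast hi
  have := th_lower (((i:ℝ)+1)/(l+1)) (by positivity)
    (by rw [div_le_one (by positivity)]; linarith)
  rw [nd, show ((i:ℝ)+1) * Real.pi / (l+1) = ((i:ℝ)+1)/(l+1) * Real.pi by ring]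
  exact this

lemma nd_pos {l i : ℕ} (hi : i < l) : 0 < nd l i := by
  refine lt_of_lt_of_le ?_ (nd_lower hi)
  have := al_pos
  positivity

/-- log of denominators -/
noncomputable def D (l : ℕ) : ℝ := ∑ i ∈ range l, (Real.log 2 + Real.log (Real.sinh (nd l i)))

lemma U_nd (l m i : ℕ) : (Polynomial.Chebyshev.U ℝ m).eval (2 - Real.cos (((i:ℝ)+1) * Real.pi / (l+1)))
    * Real.sinh (nd l i) = Real.sinh ((m + 1) * nd l i) := by
  rw [← cosh_th]
  have := Polynomial.Chebyshev.U_real_cosh (θ := nd l i) (m : ℤ)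
  rw [nd] at *
  rw [this]; push_cast; rfl

lemma log_tau (l m : ℕ) : 0 < (gridTau (l+1) (m+1) : ℝ) ∧ Real.log (gridTau (l+1) (m+1)) =
    (m+1) * S l - D l + ∑ i ∈ range l, Real.log (1 - Real.exp (-2 * ((m+1) * nd l i))) := by
  have hU : ∀ i ∈ range l, (Polynomial.Chebyshev.U ℝ m).eval
      (2 - Real.cos (((i:ℝ)+1) * Real.pi / (l+1))) =
      Real.sinh ((m + 1) * nd l i) / Real.sinh (nd l i) := by
    intro i hi
    rw [eq_div_iff, U_nd]
    exact (Real.sinh_pos_iff.2 (nd_pos (mem_range.1 hi))).ne'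
  have hpos1 : ∀ i ∈ range l, 0 < Real.sinh (nd l i) := fun i hi =>
    Real.sinh_pos_iff.2 (nd_pos (mem_range.1 hi))
  have hpos2 : ∀ i ∈ range l, 0 < Real.sinh ((m + 1) * nd l i) := fun i hi =>
    Real.sinh_pos_iff.2 (mul_pos (by positivity) (nd_pos (mem_range.1 hi)))
  rw [tau_eq, prod_congr rfl hU]
  refine ⟨prod_pos fun i hi => div_pos (hpos2 i hi) (hpos1 i hi), ?_⟩
  rw [Real.log_prod (fun i hi => (div_pos (hpos2 i hi) (hpos1 i hi)).ne')]
  rw [S, D, mul_sum, ← sum_sub_distrib, ← sum_add_distrib]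
  refine sum_congr rfl fun i hi => ?_
  rw [Real.log_div (hpos2 i hi).ne' (hpos1 i hi).ne',
    log_sinh _ (mul_pos (by positivity) (nd_pos (mem_range.1 hi)))]
  rw [nd]
  ring

lemma tau_upper (l m : ℕ) : Real.log (gridTau (l+1) (m+1)) ≤ (m+1) * S l - D l := by
  rw [(log_tau l m).2]
  have : ∑ i ∈ range l, Real.log (1 - Real.exp (-2 * ((m+1) * nd l i))) ≤ 0 := by
    refine sum_nonpos fun i hi => ?_
    have h0 := nd_pos (mem_range.1 hi)
    have h1 : Real.exp (-2 * ((m+1) * nd l i)) ≤ 1 := by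
      rw [Real.exp_le_one_iff]
      have : 0 < ((m:ℝ)+1) * nd l i := by positivity
      linarith
    exact Real.log_nonpos (by linarith) (by have := Real.exp_pos (-2 * ((m+1) * nd l i)); linarith)
  linarith

lemma log_one_sub {x : ℝ} (hx : 0 ≤ x) (hx1 : x ≤ 0.03) : -(x / 0.97) ≤ Real.log (1 - x) := by
  have h1 : 0 < 1 - x := by linarith
  have h2 := Real.one_sub_inv_le_log_of_pos h1
  refine le_trans ?_ h2
  have : (1-x)⁻¹ = 1 + x / (1-x) := by field_simp; ring
  rw [this]
  have : x / (1-x) ≤ x/0.97 := by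
    apply div_le_div_of_nonneg_left hx (by norm_num) (by linarith)
  linarith

lemma tau_lower (l m : ℕ) (hlm : l ≤ m) :
    (m+1) * S l - D l - 0.032 ≤ Real.log (gridTau (l+1) (m+1)) := by
  rw [(log_tau l m).2]
  set q := Real.exp (-2 * al) with hq
  have hq0 : 0 < q := Real.exp_pos _
  have hq1 : q ≤ 0.03 := q_upper
  have h1 : ∑ i ∈ range l, -(q^(i+1) / 0.97) ≤
      ∑ i ∈ range l, Real.log (1 - Real.exp (-2 * ((m+1) * nd l i))) := by
    refine sum_le_sum fun i hi => ?_
    have h0 := nd_lower (mem_range.1 hi)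
    have hle : Real.exp (-2 * ((m+1) * nd l i)) ≤ q^(i+1) := by
      rw [hq, ← Real.exp_nat_mul, Real.exp_le_exp]
      have hlm' : (l:ℝ) ≤ m := by exact_mod_cast hlm
      have h2 : al * (i+1) ≤ (m+1) * nd l i := by
        have h3 : ((l:ℝ)+1) * (al * ((i+1)/(l+1))) ≤ (m+1) * nd l i := by
          have := nd_pos (mem_range.1 hi)
          have := al_pos
          gcongr
        have h4 : ((l:ℝ)+1) * (al * ((i+1)/(l+1))) = al * (i+1) := by field_simp
        linarith
      push_cast
      nlinarith
    have hq2 : q^(i+1) ≤ 0.03 := by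
      calc q^(i+1) = q^i * q := pow_succ _ _
        _ ≤ 1 * q := by
            gcongr
            exact pow_le_one₀ hq0.le (by linarith)
        _ ≤ _ := by linarith
    refine le_trans ?_ (log_one_sub (Real.exp_pos _).le (hle.trans hq2))
    gcongr
  have h2 : ∑ i ∈ range l, q^(i+1) ≤ 0.031 := by
    have h3 : ∀ n : ℕ, ∑ i ∈ range n, q^(i+1) ≤ 0.031 * (1 - q^n) := by
      intro n
      induction n with
      | zero => simp
      | succ n ih =>
        rw [sum_range_succ, pow_succ]
        have : 0 < q^n := by positivity
        nlinarith
    have := h3 l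
    have : 0 < q^l := by positivity
    linarith [h3 l]
  have h3 : ∑ i ∈ range l, -(q^(i+1) / 0.97) = -((∑ i ∈ range l, q^(i+1)) / 0.97) := by
    rw [sum_neg_distrib, sum_div]
  rw [h3] at h1
  have h4 : (∑ i ∈ range l, q^(i+1)) / 0.97 ≤ 0.032 := by
    rw [div_le_iff₀ (by norm_num)]; linarith
  linarith

lemma D_eq (l : ℕ) : 2 * D l = Real.log (l+1) + ((l+1) * al - Real.log 2
    + Real.log (1 - Real.exp (-2 * ((l+1) * al))) - Real.log (Real.sinh al)) := by
  have hsa : 0 < Real.sinh al := Real.sinh_pos_iff.2 al_pos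
  have hU : (Polynomial.Chebyshev.U ℝ l).eval 3 * Real.sinh al = Real.sinh ((l + 1) * al) := by
    have := Polynomial.Chebyshev.U_real_cosh (θ := al) (l : ℤ)
    rw [show Real.cosh al = 3 by rw [al, cosh_th]; simp; norm_num] at this
    rw [this]; push_cast; rfl
  have hsl : 0 < Real.sinh ((l + 1) * al) :=
    Real.sinh_pos_iff.2 (mul_pos (by positivity) al_pos)
  have hUpos : 0 < (Polynomial.Chebyshev.U ℝ l).eval 3 := by
    rw [← hU] at hsl
    exact pos_of_mul_pos_left hsl hsa.le
  have h1 : Real.log ((Polynomial.Chebyshev.U ℝ l).eval 3) = (l+1) * al - Real.log 2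
    + Real.log (1 - Real.exp (-2 * ((l+1) * al))) - Real.log (Real.sinh al) := by
    rw [← log_sinh _ (mul_pos (by positivity) al_pos), ← hU, Real.log_mul hUpos.ne' hsa.ne']
    ring
  rw [← h1]
  have h2 : ((l:ℝ)+1) * (Polynomial.Chebyshev.U ℝ l).eval 3 =
      ∏ i ∈ range l, (2 * Real.sinh (nd l i))^2 := by
    have e1 := cheb_prod l 1
    rw [Polynomial.Chebyshev.U_eval_one] at e1
    rw [← cheb_prod l 3]
    push_cast at e1
    refine (congrArg (· * _) e1.symm).trans ?_
    rw [← prod_mul_distrib]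
    refine prod_congr rfl fun i _ => ?_
    rw [mul_pow, Real.sinh_sq, nd, cosh_th]
    ring
  rw [← Real.log_mul (by positivity) hUpos.ne', h2, Real.log_prod, D, mul_sum]
  · refine sum_congr rfl fun i hi => ?_
    have := Real.sinh_pos_iff.2 (nd_pos (mem_range.1 hi))
    rw [Real.log_pow, Real.log_mul (by norm_num) this.ne']
    push_cast; ring
  · intro i hi
    have := Real.sinh_pos_iff.2 (nd_pos (mem_range.1 hi))
    positivity

lemma D_diff (l l' : ℕ) : D l' - D l ≤ (Real.log ((l'+1)/(l+1)) + (l' - l) * al)/2 + 0.016 := by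
  have h1 := D_eq l
  have h2 := D_eq l'
  have h3 : Real.log (1 - Real.exp (-2 * ((l'+1) * al))) ≤ 0 := by
    have := al_pos
    have h1 : Real.exp (-2 * ((l'+1) * al)) ≤ 1 := by
      rw [Real.exp_le_one_iff]
      have : 0 < ((l':ℝ)+1) * al := by positivity
      linarith
    exact Real.log_nonpos (by linarith) (by have := Real.exp_pos (-2 * ((l'+1) * al)); linarith)
  have h4 : -0.032 ≤ Real.log (1 - Real.exp (-2 * ((l+1) * al))) := by
    have hle : Real.exp (-2 * ((l+1) * al)) ≤ 0.03 := by
      refine le_trans (Real.exp_le_exp.2 ?_) q_upper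
      have := al_pos
      have : 0 ≤ (l:ℝ) * al := by positivity
      linarith
    have := log_one_sub (Real.exp_pos _).le hle
    refine le_trans ?_ this
    rw [neg_le_neg_iff, div_le_iff₀ (by norm_num)]
    linarith
  rw [Real.log_div (by positivity) (by positivity)]
  linarith

lemma final_ineq (l m l' m' : ℝ) (hl : 0 < l) (h1 : l + 1 ≤ l') (h2 : l' ≤ m')
    (harea : l * m = l' * m') (hg : m' + l' + 1 ≤ m + l) :
    Real.log (l'/l) / 2 + (l' - l) * al / 2 + 0.016 + 0.032 + m' * (Real.pi / (8 * l')) ≤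
      al / 2 * (m - m') := by
  have hl' : 0 < l' := by linarith
  set g := m + l - m' - l' with hgdef
  have hg1 : 1 ≤ g := by rw [hgdef]; linarith
  set y := l' / l with hy
  have hy1 : 1 ≤ y := by rw [hy, le_div_iff₀ hl]; linarith
  have hm'g : m' ≤ (1 + g) * l := by
    have e : g * l = (l' - l) * (m' - l) := by rw [hgdef]; linear_combination harea
    nlinarith
  have hyg : y ≤ 1 + g := by
    rw [hy, div_le_iff₀ hl]; linarith
  have hypos : 0 < y := by linarith
  have hz : m' / l' ≤ 2 + g - y := by
    have : m' / l' ≤ (1 + g) / y := by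
      rw [hy, div_div_eq_mul_div]
      gcongr
    refine this.trans ?_
    rw [div_le_iff₀ hypos]
    nlinarith
  have hlog : Real.log y ≤ 0.79 * y - 1 + (1/0.79 - 1) := by
    have e1 := Real.log_le_sub_one_of_pos (show 0 < 0.79 * y by positivity)
    have e2 := Real.log_le_sub_one_of_pos (show (0:ℝ) < 1/0.79 by norm_num)
    rw [Real.log_mul (by norm_num) hypos.ne'] at e1
    rw [one_div, Real.log_inv] at e2
    rw [one_div]
    linarith
  have hpi : m' * (Real.pi / (8 * l')) ≤ 0.395 * (m' / l') := by
    have e : m' * (Real.pi / (8 * l')) = Real.pi / 8 * (m' / l') := by field_simp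
    rw [e]
    have : 0 ≤ m' / l' := div_nonneg (by linarith) hl'.le
    have := Real.pi_lt_d2
    gcongr
    linarith
  have hal := al_lower
  have e3 : al / 2 * (m - m') = al / 2 * g + (l' - l) * al / 2 := by rw [hgdef]; ring
  rw [e3]
  have : 7/8 * g ≤ al / 2 * g := mul_le_mul_of_nonneg_right (by linarith) (by linarith)
  norm_num at hlog
  linarith

end Final
end Bal

theorem balancing (l m l' m' : ℕ) (hl : 0 < l) (hm : 0 < m) (hl' : 0 < l') (hm' : 0 < m')
    (harea : l * m = l' * m') (h1 : l ≤ l') (h2 : l' ≤ m') (h3 : m' ≤ m) :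
    gridTau l m ≤ gridTau l' m' := by
  rcases Nat.eq_or_lt_of_le h1 with h | hlt
  · subst h
    rw [Nat.eq_of_mul_eq_mul_left hl harea]
  obtain ⟨a, rfl⟩ := Nat.exists_eq_succ_of_ne_zero hl.ne'
  obtain ⟨b, rfl⟩ := Nat.exists_eq_succ_of_ne_zero hm.ne'
  obtain ⟨c, rfl⟩ := Nat.exists_eq_succ_of_ne_zero hl'.ne'
  obtain ⟨d, rfl⟩ := Nat.exists_eq_succ_of_ne_zero hm'.ne'
  simp only [Nat.succ_eq_add_one] at *
  have hg : (d + 1) + (c + 1) + 1 ≤ (b + 1) + (a + 1) := by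
    by_contra hcon
    push Not at hcon
    zify at *
    have e : ((b:ℤ) + 1 - (d + 1) - (c + 1 - (a + 1))) * (a + 1) = (c - a) * (d - a) := by
      linear_combination harea
    have : (0:ℤ) < (c - a) * (d - a) := mul_pos (by linarith) (by linarith)
    have h5 : (b:ℤ) + 1 - (d + 1) - (c + 1 - (a + 1)) ≤ 0 := by linarith
    nlinarith
  have hfin := Bal.final_ineq ((a:ℝ)+1) (b+1) (c+1) (d+1) (by positivity)
    (by exact_mod_cast hlt) (by exact_mod_cast h2) (by exact_mod_cast harea) (by exact_mod_cast hg)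
  have hup := Bal.tau_upper a b
  have hlow := Bal.tau_lower c d (by omega)
  have hD := Bal.D_diff a c
  have hSu := Bal.S_upper a
  have hSl := Bal.S_lower c
  have hSu' : ((b:ℝ)+1) * Bal.S a ≤ (b+1) * ((a+1) * Bal.J / Real.pi - Bal.al / 2) := by gcongr
  have hSl' : ((d:ℝ)+1) * ((c+1) * Bal.J / Real.pi - Bal.al / 2 - Real.pi / (8 * (c+1))) ≤
    (d+1) * Bal.S c := by gcongr
  have hA : ((b:ℝ)+1) * ((a+1) * Bal.J / Real.pi) = ((d:ℝ)+1) * ((c+1) * Bal.J / Real.pi) := by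
    have : ((a:ℝ)+1) * (b+1) = (c+1) * (d+1) := by exact_mod_cast harea
    linear_combination this * (Bal.J / Real.pi)
  have hlog : Real.log (gridTau (a+1) (b+1)) ≤ Real.log (gridTau (c+1) (d+1)) := by
    nlinarith
  have := (Real.log_le_log_iff (Bal.log_tau a b).1 (Bal.log_tau c d).1).1 hlog
  exact_mod_cast this
end

section
/- Let ℓ, m, ℓ', m' be positive integers such that ℓ·m = ℓ'·m' and ℓ < ℓ' ≤ m' ≤ m. Then τ(ℓ,m) < τ(ℓ',m'): strictly balancing the side lengths strictly increases the number of spanning trees. -/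
open Finset Matrix

/-- Gram form of the Cauchy-Binet expansion. -/
theorem det_gram_expand {V K : Type*} [Fintype V] [DecidableEq V] [DecidableEq K]
    (b : K → V → ℤ) (A : Finset K) :
    (∑ k ∈ A, vecMulVec (b k) (b k)).det =
      ∑ f ∈ (Fintype.piFinset fun _ : V => A).filter Function.Injective,
        Matrix.det (Matrix.of fun v => b (f v) v • b (f v)) := by
  have h := (Matrix.detRowAlternating (R := ℤ) (n := V)).toMultilinearMap.map_sum_finset
    (fun (v : V) (k : K) => b k v • b k) (fun _ => A)
  have h1 : (∑ k ∈ A, vecMulVec (b k) (b k)) = fun v => ∑ k ∈ A, b k v • b k := by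
    ext v w
    simp [Matrix.sum_apply, vecMulVec_apply]
  rw [h1]
  refine Eq.trans h ?_
  rw [sum_filter_of_ne]
  · rfl
  intro f _ hne u v huv
  by_contra hc
  apply hne
  have : (Matrix.of fun v => b (f v) v • b (f v)) =
      (Matrix.of fun v w => b (f v) v * (Matrix.of fun v => b (f v)) v w) := by
    ext; simp
  rw [this, Matrix.det_mul_column, Matrix.det_zero_of_row_eq hc (by ext; simp [huv]), mul_zero]

theorem det_gram {V K : Type*} [Fintype V] [DecidableEq V] [DecidableEq K]
    (b : K → V → ℤ) (A : Finset K) :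
    (∑ k ∈ A, vecMulVec (b k) (b k)).det =
      ∑ S ∈ A.powersetCard (Fintype.card V), (∑ k ∈ S, vecMulVec (b k) (b k)).det := by
  simp_rw [det_gram_expand]
  rw [← sum_fiberwise_of_maps_to (t := A.powersetCard (Fintype.card V))
    (g := fun f : V → K => univ.image f)]
  · refine sum_congr rfl fun S hS => ?_
    rw [mem_powersetCard] at hS
    congr 1
    ext f
    simp only [mem_filter, Fintype.mem_piFinset]
    constructor
    · rintro ⟨⟨h1, h2⟩, h3⟩
      refine ⟨fun a => ?_, h2⟩
      rw [← h3]
      exact mem_image_of_mem _ (mem_univ a)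
    · rintro ⟨h1, h2⟩
      refine ⟨⟨fun a => hS.1 (h1 a), h2⟩, ?_⟩
      apply eq_of_subset_of_card_le
      · intro k hk
        obtain ⟨a, -, rfl⟩ := mem_image.1 hk
        exact h1 a
      · rw [card_image_of_injective _ h2, hS.2, card_univ]
  · intro f hf
    simp only [mem_filter, Fintype.mem_piFinset] at hf
    rw [mem_powersetCard, card_image_of_injective _ hf.2, card_univ]
    refine ⟨?_, rfl⟩
    intro k hk
    obtain ⟨a, -, rfl⟩ := mem_image.1 hk
    exact hf.1 a

/-- oriented incidence vector -/
noncomputable def incVec {V : Type*} [DecidableEq V] (e : Sym2 V) : V → ℤ :=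
  Pi.single (Quot.out e).1 1 - Pi.single (Quot.out e).2 1

noncomputable def augVec {V : Type*} [DecidableEq V] (r : V) : Option (Sym2 V) → V → ℤ
  | none => Pi.single r 1
  | some e => incVec e

theorem incVec_mk {V : Type*} [DecidableEq V] (a b : V) :
    incVec s(a, b) = Pi.single a 1 - Pi.single b 1 ∨
    incVec s(a, b) = Pi.single b 1 - Pi.single a 1 := by
  unfold incVec
  have h : s((Quot.out s(a,b)).1, (Quot.out s(a,b)).2) = s(a, b) := Quot.out_eq s(a,b)
  rw [Sym2.eq_iff] at h
  rcases h with ⟨h1, h2⟩ | ⟨h1, h2⟩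
  · left; rw [h1, h2]
  · right; rw [h1, h2]

theorem det_tree {V : Type*} [Fintype V] [DecidableEq V] (r : V) (S : Finset (Option (Sym2 V)))
    (hS : S.card = Fintype.card V)
    (h : ∀ v, (SimpleGraph.fromEdgeSet {e | some e ∈ S}).Reachable r v) (hr : none ∈ S) :
    (∑ k ∈ S, vecMulVec (augVec r k) (augVec r k)).det = 1 := by
  have hspan : ∀ v, (Pi.single v 1 : V → ℤ) ∈
      Submodule.span ℤ (Set.range fun k : S => augVec r k.1) := by
    intro v
    obtain ⟨p⟩ := (h v).symm
    induction p with
    | nil => exact Submodule.subset_span ⟨⟨none, hr⟩, rfl⟩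
    | cons hadj p ih =>
      rename_i u v w
      have ih := ih h
      rw [SimpleGraph.fromEdgeSet_adj] at hadj
      have hm : incVec s(u, v) ∈ Submodule.span ℤ (Set.range fun k : S => augVec w k.1) :=
        Submodule.subset_span ⟨⟨some s(u,v), hadj.1⟩, rfl⟩
      rcases incVec_mk u v with h' | h' <;> rw [h'] at hm
      · have := add_mem hm ih
        simpa using this
      · have := sub_mem ih hm
        simpa using this
  have hcard : Fintype.card V = Fintype.card S := by simp [hS]
  let ε : V ≃ S := Fintype.equivOfCardEq hcard
  let B : Matrix V V ℤ := Matrix.of fun i => augVec r (ε i).1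
  have hB : ∑ k ∈ S, vecMulVec (augVec r k) (augVec r k) = Bᵀ * B := by
    ext u v
    rw [← Finset.sum_coe_sort, ← ε.sum_comp]
    simp [Matrix.sum_apply, vecMulVec_apply, Matrix.mul_apply, B]
  have hC : ∀ v, ∃ c : V → ℤ, c ᵥ* B = Pi.single v 1 := by
    intro v
    obtain ⟨c, hc⟩ := (Submodule.mem_span_range_iff_exists_fun ℤ).1 (hspan v)
    refine ⟨fun i => c (ε i), ?_⟩
    rw [← hc, ← ε.sum_comp]
    ext w
    simp [Matrix.vecMul, dotProduct, B]
  choose C hC using hC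
  have hCB : Matrix.of C * B = 1 := by
    ext u v
    have := congrFun (hC u) v
    rw [Matrix.one_apply]
    rw [Pi.single_apply] at this
    simp only [Matrix.mul_apply]
    simpa [Matrix.vecMul, dotProduct, eq_comm] using this
  have hd := congrArg Matrix.det hCB
  rw [det_mul, det_one] at hd
  have hu : IsUnit B.det := IsUnit.of_mul_eq_one_right _ hd
  rw [hB, det_mul, det_transpose]
  rcases Int.isUnit_iff.1 hu with h | h <;> rw [h] <;> rfl

theorem det_not_tree {V : Type*} [Fintype V] [DecidableEq V] (r : V)
    (S : Finset (Option (Sym2 V))) (v : V)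
    (h : ¬ (SimpleGraph.fromEdgeSet {e | some e ∈ S}).Reachable r v) :
    (∑ k ∈ S, vecMulVec (augVec r k) (augVec r k)).det = 0 := by
  classical
  rw [← Matrix.exists_mulVec_eq_zero_iff]
  let x : V → ℤ := fun u =>
    if (SimpleGraph.fromEdgeSet {e | some e ∈ S}).Reachable r u then 0 else 1
  refine ⟨x, fun hx => ?_, ?_⟩
  · have := congrFun hx v
    simp [x, h] at this
  · rw [Matrix.sum_mulVec]
    apply sum_eq_zero
    intro k hk
    rw [Matrix.vecMulVec_mulVec]
    suffices augVec r k ⬝ᵥ x = 0 by simp [this]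
    cases k with
    | none => simp [augVec, x]
    | some e =>
      induction e with | _ a b
      have hab : x a = x b := by
        by_cases hne : a = b
        · rw [hne]
        have hadj : (SimpleGraph.fromEdgeSet {e | some e ∈ S}).Adj a b := by
          rw [SimpleGraph.fromEdgeSet_adj]; exact ⟨hk, hne⟩
        have : (SimpleGraph.fromEdgeSet {e | some e ∈ S}).Reachable r a ↔
          (SimpleGraph.fromEdgeSet {e | some e ∈ S}).Reachable r b :=
          ⟨fun h => h.trans hadj.reachable, fun h => h.trans hadj.symm.reachable⟩
        simp [x, this]
      rcases incVec_mk a b with h' | h' <;> simp [augVec, h', hab, sub_dotProduct]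

theorem det_no_root {V : Type*} [Fintype V] [DecidableEq V] (r : V)
    (S : Finset (Option (Sym2 V))) (h : none ∉ S) :
    (∑ k ∈ S, vecMulVec (augVec r k) (augVec r k)).det = 0 := by
  rw [← Matrix.exists_mulVec_eq_zero_iff]
  refine ⟨fun _ => 1, fun hx => by simpa using congrFun hx r, ?_⟩
  rw [Matrix.sum_mulVec]
  apply sum_eq_zero
  intro k hk
  rw [Matrix.vecMulVec_mulVec]
  suffices augVec r k ⬝ᵥ (fun _ => 1) = 0 by simp [this]
  cases k with
  | none => exact absurd hk h
  | some e => simp [augVec, incVec, sub_dotProduct]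

theorem fromEdgeSet_insertNone {V : Type*} (G : SimpleGraph V) (s : Finset (Sym2 V))
    (h : (s : Set (Sym2 V)) = G.edgeSet) :
    SimpleGraph.fromEdgeSet {e | some e ∈ insertNone s} = G := by
  have : {e | some e ∈ insertNone s} = G.edgeSet := by
    ext e; rw [← h]; simp
  rw [this, SimpleGraph.fromEdgeSet_edgeSet]

theorem count_trees {V : Type*} [Fintype V] [DecidableEq V] (G : SimpleGraph V)
    [DecidableRel G.Adj] (r : V) :
    (Set.ncard {H : G.Subgraph | H.IsSpanning ∧ H.coe.IsTree} : ℤ) =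
      (∑ k ∈ insertNone G.edgeFinset, vecMulVec (augVec r k) (augVec r k)).det := by
  classical
  rw [det_gram]
  have h1 : ∀ S ∈ (insertNone G.edgeFinset).powersetCard (Fintype.card V),
      (∑ k ∈ S, vecMulVec (augVec r k) (augVec r k)).det =
      if none ∈ S ∧ ∀ v, (SimpleGraph.fromEdgeSet {e | some e ∈ S}).Reachable r v
        then 1 else 0 := by
    intro S hS
    rw [mem_powersetCard] at hS
    split_ifs with hc
    · exact det_tree r S hS.2 hc.2 hc.1
    · by_cases hn : none ∈ S
      · have : ∃ v, ¬ (SimpleGraph.fromEdgeSet {e | some e ∈ S}).Reachable r v := by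
          by_contra! h
          exact hc ⟨hn, h⟩
        obtain ⟨v, hv⟩ := this
        exact det_not_tree r S v hv
      · exact det_no_root r S hn
  rw [sum_congr rfl h1, sum_boole, Nat.cast_inj, ← Set.ncard_coe_finset]
  refine Set.ncard_congr (fun H _ => insertNone (H.spanningCoe.edgeFinset)) ?_ ?_ ?_
  · rintro H ⟨hs, ht⟩
    have ht' : H.spanningCoe.IsTree :=
      (SimpleGraph.Iso.isTree_iff (H.spanningCoeEquivCoeOfSpanning hs)).2 ht
    have hcard := ht'.card_edgeFinset
    simp only [coe_filter, mem_powersetCard, Set.mem_ofPred_eq]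
    refine ⟨⟨?_, ?_⟩, ?_, ?_⟩
    · apply insertNone.monotone
      apply SimpleGraph.edgeFinset_mono
      exact H.spanningCoe_le
    · rw [card_insertNone, ← hcard]
    · simp
    · intro v
      rw [fromEdgeSet_insertNone H.spanningCoe _ (by simp)]
      exact ht'.1.preconnected r v
  · rintro H K ⟨hs, ht⟩ ⟨hs', ht'⟩ heq
    have h2 : H.spanningCoe = K.spanningCoe := by
      rw [← fromEdgeSet_insertNone H.spanningCoe (H.spanningCoe.edgeFinset) (by simp), heq,
        fromEdgeSet_insertNone K.spanningCoe _ (by simp)]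
    ext a b
    · exact ⟨fun _ => hs' a, fun _ => hs a⟩
    · rw [← SimpleGraph.Subgraph.spanningCoe_adj, h2, SimpleGraph.Subgraph.spanningCoe_adj]
  · intro S hS
    simp only [coe_filter, mem_powersetCard, Set.mem_ofPred_eq] at hS
    obtain ⟨⟨hsub, hcard⟩, hn, hreach⟩ := hS
    set T := SimpleGraph.fromEdgeSet {e | some e ∈ S} with hT
    have hin : ∀ e, some e ∈ S → e ∈ G.edgeSet := by
      intro e he
      have := hsub he
      simpa using this
    have hle : T ≤ G := by
      intro a b hab
      rw [hT, SimpleGraph.fromEdgeSet_adj] at hab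
      exact hin _ hab.1
    have hedge : T.edgeSet = {e | some e ∈ S} := by
      rw [hT, SimpleGraph.edgeSet_fromEdgeSet]
      ext e
      simp only [Set.mem_sdiff, Set.mem_ofPred_eq, and_iff_left_iff_imp]
      intro he hd
      exact G.not_isDiag_of_mem_edgeSet (hin e he) hd
    have hins : insertNone T.edgeFinset = S := by
      ext k
      cases k with
      | none => simp [hn]
      | some e => simp [hedge]
    have htree : T.IsTree := by
      rw [SimpleGraph.isTree_iff_connected_and_card]
      have : Nonempty V := ⟨r⟩
      refine ⟨⟨fun u v => (hreach u).symm.trans (hreach v)⟩, ?_⟩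
      rw [Nat.card_eq_fintype_card, Nat.card_eq_fintype_card, ← SimpleGraph.edgeFinset_card,
        ← card_insertNone, hins, hcard]
    have hspan : (SimpleGraph.toSubgraph T hle).IsSpanning :=
      SimpleGraph.toSubgraph.isSpanning T hle
    have hsc : (SimpleGraph.toSubgraph T hle).spanningCoe = T := by
      ext a b; simp [SimpleGraph.toSubgraph]
    refine ⟨SimpleGraph.toSubgraph T hle, ⟨hspan, ?_⟩, ?_⟩
    · refine (SimpleGraph.Iso.isTree_iff
        (SimpleGraph.Subgraph.spanningCoeEquivCoeOfSpanning _ hspan)).1 ?_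
      rw [hsc]; exact htree
    · rw [← hins]
      congr 1
      ext e
      simp [hsc]

theorem incVec_mul_of_ne {V : Type*} [DecidableEq V] {u v : V} (huv : u ≠ v) (e : Sym2 V) :
    incVec e u * incVec e v = if e = s(u, v) then -1 else 0 := by
  induction e with | _ a b
  rcases incVec_mk a b with h | h <;> rw [h] <;>
  simp only [Pi.sub_apply, Pi.single_apply, Sym2.eq_iff] <;> grind

theorem incVec_mul_self {V : Type*} [DecidableEq V] (u : V) (e : Sym2 V) (he : ¬ e.IsDiag) :
    incVec e u * incVec e u = if u ∈ e then 1 else 0 := by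
  induction e with | _ a b
  simp only [Sym2.mk_isDiag_iff] at he
  rcases incVec_mk a b with h | h <;> rw [h] <;>
  simp only [Pi.sub_apply, Pi.single_apply, Sym2.mem_iff] <;> grind

theorem sum_inc_eq_lap {V : Type*} [Fintype V] [DecidableEq V] (G : SimpleGraph V)
    [DecidableRel G.Adj] :
    ∑ e ∈ G.edgeFinset, vecMulVec (incVec e) (incVec e) = G.lapMatrix ℤ := by
  ext u v
  simp only [Matrix.sum_apply, vecMulVec_apply]
  by_cases huv : u = v
  · subst huv
    rw [sum_congr rfl (fun e he => incVec_mul_self u e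
      (G.not_isDiag_of_mem_edgeFinset he)), sum_boole]
    have : (G.edgeFinset.filter (u ∈ ·)) = G.incidenceFinset u := by
      rw [SimpleGraph.incidenceFinset_eq_filter]
    rw [this, SimpleGraph.card_incidenceFinset_eq_degree]
    simp [SimpleGraph.lapMatrix, SimpleGraph.degMatrix]
  · rw [sum_congr rfl (fun e he => incVec_mul_of_ne huv e)]
    simp [SimpleGraph.lapMatrix, SimpleGraph.degMatrix, huv, SimpleGraph.adjMatrix_apply]
    split_ifs <;> simp

theorem matrix_tree {V : Type*} [Fintype V] [DecidableEq V] (G : SimpleGraph V)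
    [DecidableRel G.Adj] (r : V) :
    (Set.ncard {H : G.Subgraph | H.IsSpanning ∧ H.coe.IsTree} : ℤ) =
      (G.lapMatrix ℤ + vecMulVec (Pi.single r 1) (Pi.single r 1)).det := by
  rw [count_trees G r, sum_insertNone, add_comm, ← sum_inc_eq_lap]
  rfl

theorem det_eig {V : Type*} [Fintype V] [DecidableEq V] (L W : Matrix V V ℝ) (D : V → ℝ)
    (k r : V) (hWL : W * L = diagonal D * W) (hW : IsUnit W.det) (hL : L *ᵥ 1 = 0)
    (hk : W k = 1) (hD : D k = 0) :
    (Fintype.card V : ℝ) * (L + vecMulVec (Pi.single r 1) (Pi.single r 1)).det =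
      ∏ i ∈ univ.erase k, D i := by
  have h1 : L + vecMulVec (Pi.single r 1) (1 : V → ℝ) =
      (L + vecMulVec (Pi.single r 1) (Pi.single r 1)) *
        (1 + vecMulVec (1 : V → ℝ) (1 - Pi.single r 1)) := by
    rw [mul_add, mul_one, Matrix.mul_vecMulVec, Matrix.add_mulVec, hL, Matrix.vecMulVec_mulVec]
    simp [Matrix.vecMulVec_sub]
  have h2 : (1 + vecMulVec (1 : V → ℝ) (1 - Pi.single r 1)).det = Fintype.card V := by
    rw [Matrix.vecMulVec_eq Unit, Matrix.det_one_add_replicateCol_mul_replicateRow]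
    simp [sub_dotProduct]
  have h3 : W * (L + vecMulVec (Pi.single r 1) (1 : V → ℝ)) =
      (diagonal D + vecMulVec (W *ᵥ Pi.single r 1) (Pi.single k 1)) * W := by
    rw [mul_add, add_mul, hWL, Matrix.mul_vecMulVec, Matrix.vecMulVec_mul]
    congr 2
    rw [← hk]
    simp [Matrix.row]
  have h4 : (diagonal D + vecMulVec (W *ᵥ Pi.single r 1) (Pi.single k 1)).det =
      ∏ i ∈ univ.erase k, D i := by
    have h5 : diagonal D + vecMulVec (W *ᵥ Pi.single r 1) (Pi.single k 1) =
      (diagonal D).updateCol k (W *ᵥ Pi.single r 1) := by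
      ext i j
      by_cases hj : j = k
      · subst hj
        by_cases hi : i = j
        · subst hi; simp [vecMulVec_apply, hD]
        · simp [vecMulVec_apply, hi]
      · simp [vecMulVec_apply, hj]
    rw [h5, ← Matrix.cramer_apply, Matrix.cramer_eq_adjugate_mulVec, Matrix.adjugate_diagonal,
      Matrix.mulVec_diagonal]
    simp [hk]
  have h7 := congrArg Matrix.det h3
  rw [det_mul, det_mul, h4, mul_comm] at h7
  rw [← hW.mul_left_inj, ← h7, h1, det_mul, h2, mul_comm (Fintype.card V : ℝ)]

noncomputable def eigc (n : ℕ) (i : ℕ) : ℝ := 2 - 2 * Real.cos (Real.pi * i / n)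

noncomputable def pathP (n : ℕ) : Matrix (Fin n) (Fin n) ℝ :=
  Matrix.of fun i a => Real.cos (Real.pi * (i : ℕ) / n * ((a : ℕ) + 1 / 2))

theorem eigc_zero (n : ℕ) : eigc n 0 = 0 := by simp [eigc]

theorem path_eig (n : ℕ) (i : Fin n) [DecidableRel (SimpleGraph.pathGraph n).Adj] :
    (SimpleGraph.pathGraph n).lapMatrix ℝ *ᵥ (pathP n i) = eigc n i • pathP n i := by
  ext a
  rw [SimpleGraph.lapMatrix_mulVec_apply]
  have hn : (n : ℝ) ≠ 0 := by have := i.pos; positivity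
  set t : ℝ := Real.pi * (i : ℕ) / n with ht
  let x : ℤ → ℝ := fun z => Real.cos (t * (z + 1 / 2))
  have hx : ∀ c : Fin n, pathP n i c = x (c : ℕ) := by
    intro c; simp [pathP, x, ht]
  have hx0 : x (-1) = x 0 := by
    simp only [x]; rw [← Real.cos_neg]; congr 1; push_cast; ring
  have hxn : x n = x (n - 1) := by
    simp only [x]; rw [← Real.cos_neg, ← Real.cos_add_int_mul_two_pi _ (i : ℕ)]
    congr 1; push_cast; rw [ht]; field_simp; ring
  have hrec : ∀ z : ℤ, 2 * x z - x (z + 1) - x (z - 1) = eigc n i * x z := by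
    intro z
    have e1 : t * (((z + 1 : ℤ) : ℝ) + 1 / 2) = t * (z + 1 / 2) + t := by push_cast; ring
    have e2 : t * (((z - 1 : ℤ) : ℝ) + 1 / 2) = t * (z + 1 / 2) - t := by push_cast; ring
    simp only [x, e1, e2, Real.cos_add, Real.cos_sub, eigc, ← ht]
    ring
  have hsum : ((SimpleGraph.pathGraph n).degree a : ℝ) * pathP n i a -
      ∑ u ∈ (SimpleGraph.pathGraph n).neighborFinset a, pathP n i u =
      ∑ u : Fin n, ((if (a : ℕ) + 1 = u then x (a : ℕ) - x ((a : ℕ) + 1) else 0) +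
        (if (u : ℕ) + 1 = a then x (a : ℕ) - x ((a : ℕ) - 1) else 0)) := by
    rw [← SimpleGraph.card_neighborFinset_eq_degree, ← nsmul_eq_mul, ← sum_const,
      ← sum_sub_distrib, SimpleGraph.neighborFinset_eq_filter, sum_filter]
    refine sum_congr rfl fun u _ => ?_
    rw [hx, hx]
    simp only [SimpleGraph.pathGraph_adj]
    by_cases h1 : (a : ℕ) + 1 = u
    · have h2 : ¬ (u : ℕ) + 1 = a := by omega
      rw [if_pos (Or.inl h1), if_pos h1, if_neg h2, ← h1]; push_cast; ring
    · by_cases h2 : (u : ℕ) + 1 = a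
      · rw [if_pos (Or.inr h2), if_neg h1, if_pos h2, ← h2]; push_cast; ring_nf
      · simp [h1, h2]
  have hs1 : ∑ u : Fin n, (if (a : ℕ) + 1 = u then x (a : ℕ) - x ((a : ℕ) + 1) else 0) =
      x (a : ℕ) - x ((a : ℕ) + 1) := by
    by_cases h : (a : ℕ) + 1 < n
    · rw [sum_eq_single ⟨(a : ℕ) + 1, h⟩]
      · simp
      · intro b _ hb
        rw [if_neg]
        intro h'; apply hb; ext; simp [h']
      · simp
    · have e : ((a : ℕ) : ℤ) = n - 1 := by have := a.2; omega
      rw [e]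
      simp [hxn]
  have hs2 : ∑ u : Fin n, (if (u : ℕ) + 1 = a then x (a : ℕ) - x ((a : ℕ) - 1) else 0) =
      x (a : ℕ) - x ((a : ℕ) - 1) := by
    by_cases h : 0 < (a : ℕ)
    · rw [sum_eq_single ⟨(a : ℕ) - 1, by have := a.2; omega⟩]
      · simp; omega
      · intro b _ hb
        rw [if_neg]
        intro h'; apply hb; ext; simp; omega
      · simp
    · have e : ((a : ℕ) : ℤ) = 0 := by omega
      rw [e]
      simp [hx0]
  rw [hsum, sum_add_distrib, hs1, hs2, Pi.smul_apply, hx, smul_eq_mul, ← hrec]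
  ring

theorem eigc_inj (n : ℕ) : Function.Injective fun i : Fin n => eigc n i := by
  intro i j h
  have hn : (0 : ℝ) < n := by have := i.pos; positivity
  simp only [eigc] at h
  have h' : Real.cos (Real.pi * (i : ℕ) / n) = Real.cos (Real.pi * (j : ℕ) / n) := by linarith
  have hm : ∀ i : Fin n, Real.pi * (i : ℕ) / n ∈ Set.Icc 0 Real.pi := by
    intro i
    have : ((i : ℕ) : ℝ) ≤ n := by exact_mod_cast i.2.le
    refine ⟨by positivity, ?_⟩
    rw [div_le_iff₀ hn]
    exact mul_le_mul_of_nonneg_left this Real.pi_pos.le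
  have := Real.injOn_cos (hm i) (hm j) h'
  have hp := Real.pi_pos
  field_simp at this
  ext; exact_mod_cast this

theorem pathP_unit (n : ℕ) : IsUnit (pathP n).det := by
  classical
  rw [← Matrix.isUnit_iff_isUnit_det, ← Matrix.linearIndependent_rows_iff_isUnit]
  refine Module.End.eigenvectors_linearIndependent'
    (Matrix.toLin' ((SimpleGraph.pathGraph n).lapMatrix ℝ)) (fun i : Fin n => eigc n i)
    (eigc_inj n) _ ?_
  intro i
  rw [Module.End.hasEigenvector_iff, Module.End.mem_eigenspace_iff]
  refine ⟨?_, ?_⟩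
  · rw [Matrix.toLin'_apply]; exact path_eig n i
  · intro h
    have h0 : Real.cos (Real.pi * (i : ℕ) / n * (1 / 2)) = 0 := by
      have := congrFun h ⟨0, i.pos⟩
      simpa [pathP, Matrix.row] using this
    have hn : (0 : ℝ) < n := by have := i.pos; positivity
    have hi : ((i : ℕ) : ℝ) < n := by exact_mod_cast i.2
    have hpos : 0 < Real.cos (Real.pi * (i : ℕ) / n * (1 / 2)) := by
      apply Real.cos_pos_of_mem_Ioo
      have hp := Real.pi_pos
      have : 0 ≤ Real.pi * (i : ℕ) / n * (1 / 2) := by positivity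
      refine ⟨by linarith, ?_⟩
      have : Real.pi * (i : ℕ) / n < Real.pi := by
        rw [div_lt_iff₀ hn]
        exact mul_lt_mul_of_pos_left hi hp
      linarith
    linarith

theorem pathP_mul (n : ℕ) [DecidableRel (SimpleGraph.pathGraph n).Adj] :
    pathP n * (SimpleGraph.pathGraph n).lapMatrix ℝ =
      diagonal (fun i : Fin n => eigc n i) * pathP n := by
  have hs : ((SimpleGraph.pathGraph n).lapMatrix ℝ)ᵀ = (SimpleGraph.pathGraph n).lapMatrix ℝ :=
    SimpleGraph.isSymm_lapMatrix ℝ _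
  ext i a
  rw [Matrix.diagonal_mul]
  have := congrFun (path_eig n i) a
  rw [← hs, Matrix.mulVec_transpose] at this
  exact this

theorem lap_boxProd {α β : Type*} [Fintype α] [Fintype β] [DecidableEq α] [DecidableEq β]
    (G : SimpleGraph α) (H : SimpleGraph β) [DecidableRel G.Adj] [DecidableRel H.Adj]
    [DecidableRel (G.boxProd H).Adj] :
    (G.boxProd H).lapMatrix ℝ = kroneckerMap (· * ·) (G.lapMatrix ℝ) (1 : Matrix β β ℝ) +
      kroneckerMap (· * ·) (1 : Matrix α α ℝ) (H.lapMatrix ℝ) := by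
  classical
  ext ⟨a, b⟩ ⟨c, d⟩
  have hdeg : (G.boxProd H).degree (a, b) = G.degree a + H.degree b := by
    convert SimpleGraph.degree_boxProd (G := G) (H := H) (a, b)
  simp only [SimpleGraph.lapMatrix, SimpleGraph.degMatrix, Matrix.sub_apply, Matrix.add_apply,
    Matrix.kroneckerMap_apply, Matrix.diagonal_apply, Matrix.one_apply,
    SimpleGraph.adjMatrix_apply, SimpleGraph.boxProd_adj, Prod.mk.injEq]
  by_cases h1 : a = c <;> by_cases h2 : b = d
  · subst h1; subst h2
    have h' : (((G.boxProd H).degree (a, b) : ℕ) : ℝ) = G.degree a + H.degree b := by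
      exact_mod_cast hdeg
    simp only [and_self, if_true, SimpleGraph.irrefl, false_and, or_self, if_false, sub_zero,
      mul_one, one_mul]
    rw [← h']
    congr!
  · subst h1; simp [h2]
  · subst h2; simp [h1]
  · simp [h1, h2]

theorem gridTau_prod (l m : ℕ) (hl : 0 < l) (hm : 0 < m) :
    ((l * m : ℕ) : ℝ) * gridTau l m =
      ∏ k ∈ (univ : Finset (Fin l × Fin m)).erase (⟨0, hl⟩, ⟨0, hm⟩),
        (eigc l k.1 + eigc m k.2) := by
  classical
  let r : Fin l × Fin m := (⟨0, hl⟩, ⟨0, hm⟩)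
  have h1 := matrix_tree (gridGraph l m) r
  have h2 : (gridTau l m : ℝ) =
      ((gridGraph l m).lapMatrix ℝ + vecMulVec (Pi.single r 1) (Pi.single r 1)).det := by
    have h3 := congrArg (Int.castRingHom ℝ) h1
    rw [RingHom.map_det] at h3
    unfold gridTau
    refine Eq.trans (by simp) (h3.trans ?_)
    congr 1
    ext u v
    simp [SimpleGraph.lapMatrix, SimpleGraph.degMatrix, Matrix.diagonal_apply, vecMulVec_apply,
      SimpleGraph.adjMatrix_apply, Pi.single_apply, apply_ite (Int.cast : ℤ → ℝ)]
  have h4 := det_eig ((gridGraph l m).lapMatrix ℝ) (kroneckerMap (· * ·) (pathP l) (pathP m))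
    (fun k => eigc l k.1 + eigc m k.2) r r ?_ ?_ ?_ ?_ ?_
  · rw [h2, ← h4]; simp
  · have hlap : (gridGraph l m).lapMatrix ℝ = _ :=
      lap_boxProd (SimpleGraph.pathGraph l) (SimpleGraph.pathGraph m)
    rw [hlap, mul_add, ← Matrix.mul_kronecker_mul, ← Matrix.mul_kronecker_mul, pathP_mul,
      pathP_mul, mul_one, mul_one]
    ext ⟨i, j⟩ ⟨a, b⟩
    simp [Matrix.diagonal_mul]
    ring
  · rw [Matrix.det_kronecker]
    exact ((pathP_unit l).pow _).mul ((pathP_unit m).pow _)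
  · exact SimpleGraph.lapMatrix_mulVec_const_eq_zero ..
  · ext ⟨a, b⟩
    simp [pathP, r]
  · simp [r, eigc_zero]

open Polynomial in
theorem U_prod (p : ℕ) (x : ℝ) :
    ∏ i ∈ range p, (2 * x - 2 * Real.cos (Real.pi * (i + 1) / (p + 1))) =
      (Chebyshev.U ℝ p).eval x := by
  have hroots := Chebyshev.roots_U_real p
  have hinj : Set.InjOn (fun k : ℕ => Real.cos ((k + 1) * Real.pi / (p + 1))) (range p) :=
    (Finset.range p).nodup_map_iff_injOn.mp (Chebyshev.roots_U_real_nodup p)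
  have hc : Multiset.card (Chebyshev.U ℝ p).roots = (Chebyshev.U ℝ p).natDegree := by
    rw [hroots, Chebyshev.natDegree_U_natCast, Finset.card_val, card_image_of_injOn hinj,
      card_range]
  have h := C_leadingCoeff_mul_prod_multiset_X_sub_C hc
  rw [hroots, Chebyshev.leadingCoeff_U_natCast] at h
  have h2 : (((range p).image (fun k : ℕ => Real.cos ((k + 1) * Real.pi / (p + 1)))).val.map
      fun a => X - C a).prod = ∏ i ∈ range p, (X - C (Real.cos ((i + 1) * Real.pi / (p + 1)))) := by
    exact prod_image (s := range p) (f := fun a => X - C a) hinj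
  rw [h2] at h
  rw [← h, eval_mul, eval_C, eval_prod]
  simp only [eval_sub, eval_X, eval_C]
  have h3 : (2 : ℝ) ^ p = ∏ _i ∈ range p, (2 : ℝ) := by simp
  rw [h3, ← prod_mul_distrib]
  refine prod_congr rfl fun i _ => ?_
  rw [mul_comm Real.pi]; ring

open Polynomial in
theorem T_prod (M : ℕ) (hM : 0 < M) (x : ℝ) :
    ∏ i ∈ range M, (2 * x - 2 * Real.cos ((2 * i + 1) * Real.pi / (2 * M))) =
      2 * (Chebyshev.T ℝ M).eval x := by
  have hroots := Chebyshev.roots_T_real M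
  have hinj : Set.InjOn (fun k : ℕ => Real.cos ((2 * k + 1) * Real.pi / (2 * M))) (range M) :=
    (Finset.range M).nodup_map_iff_injOn.mp (Chebyshev.roots_T_real_nodup M)
  have hc : Multiset.card (Chebyshev.T ℝ M).roots = (Chebyshev.T ℝ M).natDegree := by
    rw [hroots, Chebyshev.natDegree_T, Finset.card_val, card_image_of_injOn hinj,
      card_range, Int.natAbs_natCast]
  have h := C_leadingCoeff_mul_prod_multiset_X_sub_C hc
  rw [hroots, Chebyshev.leadingCoeff_T] at h
  have h2 : (((range M).image (fun k : ℕ => Real.cos ((2 * k + 1) * Real.pi / (2 * M)))).val.map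
      fun a => X - C a).prod =
      ∏ i ∈ range M, (X - C (Real.cos ((2 * i + 1) * Real.pi / (2 * M)))) := by
    exact prod_image (s := range M) (f := fun a => X - C a) hinj
  rw [h2] at h
  rw [← h, eval_mul, eval_C, eval_prod]
  simp only [eval_sub, eval_X, eval_C]
  rw [← mul_assoc, ← pow_succ']
  have : (M : ℤ).natAbs - 1 + 1 = (range M).card := by simp; omega
  rw [this, ← prod_const, ← prod_mul_distrib]
  refine prod_congr rfl fun i _ => ?_
  ring

theorem U_sinh (p : ℕ) (θ : ℝ) :
    (Polynomial.Chebyshev.U ℝ p).eval (Real.cosh θ) * Real.sinh θ =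
      Real.sinh ((p + 1 : ℕ) * θ) := by
  rw [Polynomial.Chebyshev.U_real_cosh]; push_cast; rfl

theorem T_cosh (M : ℕ) (θ : ℝ) :
    (Polynomial.Chebyshev.T ℝ M).eval (Real.cosh θ) = Real.cosh (M * θ) := by
  rw [Polynomial.Chebyshev.T_real_cosh]; push_cast; rfl

/-- `2 cosh (gth x) = 4 - 2 cos x`. -/
noncomputable def gth (x : ℝ) : ℝ := 2 * Real.arsinh (Real.sin (x / 2))

theorem cosh_gth (x : ℝ) : Real.cosh (gth x) = 2 - Real.cos x := by
  have h : Real.cos x = 1 - 2 * Real.sin (x / 2) ^ 2 := by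
    have := Real.cos_two_mul (x / 2)
    rw [Real.cos_sq'] at this
    rw [show 2 * (x / 2) = x by ring] at this
    rw [this]; ring
  rw [gth, Real.cosh_two_mul, Real.cosh_sq, Real.sinh_arsinh, h]; ring

theorem gth_pos {x : ℝ} (h0 : 0 < x) (h1 : x < 2 * Real.pi) : 0 < gth x := by
  unfold gth
  have : 0 < Real.sin (x / 2) := Real.sin_pos_of_pos_of_lt_pi (by linarith) (by linarith)
  have := Real.arsinh_pos_iff.2 this
  linarith

noncomputable def cc : ℝ := Real.arsinh 1

theorem cosh_two_cc : Real.cosh (2 * cc) = 3 := by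
  rw [cc, Real.cosh_two_mul, Real.cosh_sq, Real.sinh_arsinh]; norm_num

theorem cc_pos : 0 < cc := Real.arsinh_pos_iff.2 one_pos

noncomputable def th (p i : ℕ) : ℝ := gth (Real.pi * (i + 1) / (p + 1))

theorem th_pos {p i : ℕ} (hi : i < p) : 0 < th p i := by
  have hp := Real.pi_pos
  apply gth_pos (by positivity)
  have : ((i : ℝ) + 1) ≤ p + 1 := by
    have : (i : ℝ) ≤ p := by exact_mod_cast hi.le
    linarith
  rw [div_lt_iff₀ (by positivity)]
  nlinarith

theorem four_sinh_sq (θ : ℝ) :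
    (2 * Real.sinh θ) ^ 2 = (2 * Real.cosh θ - 2) * (2 * Real.cosh θ + 2) := by
  have := Real.cosh_sq θ
  nlinarith

theorem double_prod (p M : ℕ) (hM : 0 < M) :
    (∏ i ∈ range p, 2 * Real.cosh (M * th p i)) ^ 2 * (4 * Real.cosh (M * (2 * cc))) =
      ∏ j ∈ range M,
        (2 * Real.sinh ((p + 1 : ℕ) * gth ((2 * j + 1) * Real.pi / (2 * M)))) ^ 2 := by
  have h1 : ∏ i ∈ range p, 2 * Real.cosh (M * th p i) =
      ∏ j ∈ range M, (Polynomial.Chebyshev.U ℝ p).eval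
        (Real.cosh (gth ((2 * j + 1) * Real.pi / (2 * M)))) := by
    simp_rw [← T_cosh, ← T_prod M hM, ← U_prod]
    rw [prod_comm]
    refine prod_congr rfl fun j _ => prod_congr rfl fun i _ => ?_
    rw [th, cosh_gth, cosh_gth]; ring
  have h2 : 4 * Real.cosh (M * (2 * cc)) =
      ∏ j ∈ range M, (2 * Real.sinh (gth ((2 * j + 1) * Real.pi / (2 * M)))) ^ 2 := by
    simp_rw [four_sinh_sq, cosh_gth]
    rw [prod_mul_distrib]
    have e1 := T_prod M hM (Real.cosh 0)
    have e2 := T_prod M hM (Real.cosh (2 * cc))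
    rw [T_cosh] at e1 e2
    rw [cosh_two_cc] at e2
    simp only [mul_zero, Real.cosh_zero] at e1
    have e3 : (4 : ℝ) * Real.cosh (M * (2 * cc)) = (2 * 1) * (2 * Real.cosh (M * (2 * cc))) := by
      ring
    rw [e3, ← e1, ← e2]
    congr 1 <;> refine prod_congr rfl fun j _ => ?_ <;> ring
  rw [h1, h2, ← prod_pow, ← prod_mul_distrib]
  refine prod_congr rfl fun j _ => ?_
  rw [← U_sinh]; ring

theorem sinh_pow_mono {φ : ℝ} (hφ : 0 < φ) {l l' : ℕ} (hl : l ≤ l') :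
    (2 * Real.sinh (l * φ)) ^ l' ≤ (2 * Real.sinh (l' * φ)) ^ l := by
  have key : ∀ n : ℕ, 2 * Real.sinh (n * φ) = Real.exp (n * φ) * (1 - Real.exp (-(2 * (n * φ)))) := by
    intro n
    rw [mul_sub, ← Real.exp_add, Real.sinh_eq]
    ring_nf
  have hpos : ∀ n : ℕ, 0 ≤ 1 - Real.exp (-(2 * (n * φ))) := by
    intro n
    have : Real.exp (-(2 * (n * φ))) ≤ 1 := Real.exp_le_one_iff.2 (by
      have : 0 ≤ n * φ := by positivity
      linarith)
    linarith
  rw [key, key, mul_pow, mul_pow, ← Real.exp_nat_mul, ← Real.exp_nat_mul]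
  have e : (l' : ℝ) * (l * φ) = l * (l' * φ) := by ring
  rw [e]
  apply mul_le_mul_of_nonneg_left _ (Real.exp_pos _).le
  calc (1 - Real.exp (-(2 * (l * φ)))) ^ l' ≤ (1 - Real.exp (-(2 * (l * φ)))) ^ l :=
        pow_le_pow_of_le_one (hpos l) (by linarith [Real.exp_pos (-(2 * (l * φ)))]) hl
    _ ≤ _ := by
        apply pow_le_pow_left₀ (hpos l)
        have : (l : ℝ) ≤ l' := by exact_mod_cast hl
        have : Real.exp (-(2 * (l' * φ))) ≤ Real.exp (-(2 * (l * φ))) :=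
          Real.exp_le_exp.2 (by nlinarith)
        linarith

theorem exp_le_two_cosh (x : ℝ) : Real.exp x ≤ 2 * Real.cosh x := by
  rw [Real.cosh_eq]; linarith [Real.exp_pos (-x)]

theorem two_cosh_le {x : ℝ} (hx : 0 ≤ x) : 2 * Real.cosh x ≤ 2 * Real.exp x := by
  rw [Real.cosh_eq]
  have : Real.exp (-x) ≤ Real.exp x := Real.exp_le_exp.2 (by linarith)
  linarith

noncomputable def Th (p : ℕ) : ℝ := ∑ i ∈ range p, th p i + cc

theorem F_lower (p M : ℕ) :
    Real.exp (2 * M * Th p) ≤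
      (∏ i ∈ range p, 2 * Real.cosh (M * th p i)) ^ 2 * (4 * Real.cosh (M * (2 * cc))) := by
  have e : Real.exp (2 * M * Th p) =
      (∏ i ∈ range p, Real.exp (M * th p i)) ^ 2 * Real.exp (M * (2 * cc)) := by
    rw [← Real.exp_sum, ← Real.exp_nat_mul, ← Real.exp_add, ← mul_sum, Th]
    congr 1; push_cast; ring
  rw [e]
  gcongr with i _
  · exact exp_le_two_cosh _
  · have := exp_le_two_cosh (M * (2 * cc))
    have := Real.exp_pos (M * (2 * cc))
    linarith

theorem F_upper (p M : ℕ) :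
    (∏ i ∈ range p, 2 * Real.cosh (M * th p i)) ^ 2 * (4 * Real.cosh (M * (2 * cc))) ≤
      4 ^ (p + 1) * Real.exp (2 * M * Th p) := by
  have e : 4 ^ (p + 1) * Real.exp (2 * M * Th p) =
      (∏ i ∈ range p, 2 * Real.exp (M * th p i)) ^ 2 * (4 * Real.exp (M * (2 * cc))) := by
    rw [prod_mul_distrib, mul_pow, prod_const, card_range, ← pow_mul, mul_comm p 2, pow_mul]
    have : Real.exp (2 * M * Th p) =
      (∏ i ∈ range p, Real.exp (M * th p i)) ^ 2 * Real.exp (M * (2 * cc)) := by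
      rw [← Real.exp_sum, ← Real.exp_nat_mul, ← Real.exp_add, ← mul_sum, Th]
      congr 1; push_cast; ring
    rw [this]; norm_num; ring
  rw [e]
  have hc := cc_pos
  gcongr with i hi
  · have := th_pos (mem_range.1 hi)
    have := two_cosh_le (x := M * th p i) (by positivity)
    linarith
  · have := two_cosh_le (x := M * (2 * cc)) (by positivity)
    linarith

theorem Th_mono {p p' : ℕ} (h : p ≤ p') :
    ((p' + 1 : ℕ) : ℝ) * Th p ≤ ((p + 1 : ℕ) : ℝ) * Th p' := by
  by_contra! hlt
  set d := ((p' + 1 : ℕ) : ℝ) * Th p - ((p + 1 : ℕ) : ℝ) * Th p' with hd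
  have hdpos : 0 < d := by linarith
  obtain ⟨M, hM⟩ := exists_nat_gt (((p' + 1) * (p + 1) : ℕ) * Real.log 4 / (2 * d))
  have hM0 : 0 < M := by
    have : (0 : ℝ) < M := lt_of_le_of_lt (by
      have := Real.log_nonneg (show (1 : ℝ) ≤ 4 by norm_num)
      positivity) hM
    exact_mod_cast this
  have h1 : ((∏ i ∈ range p, 2 * Real.cosh (M * th p i)) ^ 2 *
      (4 * Real.cosh (M * (2 * cc)))) ^ (p' + 1) ≤
      ((∏ i ∈ range p', 2 * Real.cosh (M * th p' i)) ^ 2 *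
      (4 * Real.cosh (M * (2 * cc)))) ^ (p + 1) := by
    rw [double_prod p M hM0, double_prod p' M hM0, ← prod_pow, ← prod_pow]
    apply prod_le_prod
    · intro j _; positivity
    · intro j hj
      have hj : j < M := mem_range.1 hj
      have hφ : 0 < gth ((2 * j + 1) * Real.pi / (2 * M)) := by
        have hp := Real.pi_pos
        have hMr : (0 : ℝ) < M := by exact_mod_cast hM0
        apply gth_pos (by positivity)
        rw [div_lt_iff₀ (by positivity)]
        have : (j : ℝ) + 1 ≤ M := by exact_mod_cast hj
        nlinarith
      rw [← pow_mul, ← pow_mul, mul_comm 2 (p' + 1), mul_comm 2 (p + 1), pow_mul, pow_mul]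
      apply pow_le_pow_left₀
      · have : 0 < Real.sinh ((p + 1 : ℕ) * gth ((2 * j + 1) * Real.pi / (2 * M))) :=
          Real.sinh_pos_iff.2 (by positivity)
        positivity
      · exact sinh_pow_mono hφ (by omega)
  have h2 : Real.exp (2 * M * Th p) ^ (p' + 1) ≤
      (4 ^ (p' + 1) * Real.exp (2 * M * Th p')) ^ (p + 1) :=
    (pow_le_pow_left₀ (Real.exp_pos _).le (F_lower p M) _).trans
      (h1.trans (pow_le_pow_left₀ ((Real.exp_pos _).le.trans (F_lower p' M)) (F_upper p' M) _))
  have h3 := Real.log_le_log (by positivity) h2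
  rw [Real.log_pow, Real.log_pow, Real.log_mul (by positivity) (by positivity), Real.log_exp,
    Real.log_exp, Real.log_pow] at h3
  rw [div_lt_iff₀ (by positivity), hd] at hM
  push_cast at h3 hM
  nlinarith

theorem eigc_succ (p i : ℕ) :
    eigc (p + 1) (i + 1) = 2 - 2 * Real.cos (Real.pi * (i + 1) / (p + 1)) := by
  simp [eigc]

theorem prod_eigc (p : ℕ) (t : ℝ) :
    ∏ i ∈ range p, (t + eigc (p + 1) (i + 1)) =
      (Polynomial.Chebyshev.U ℝ p).eval (1 + t / 2) := by
  rw [← U_prod]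
  refine prod_congr rfl fun i _ => ?_
  rw [eigc_succ]; ring

theorem prod_eigc_zero (p : ℕ) : ∏ i ∈ range p, eigc (p + 1) (i + 1) = p + 1 := by
  have := prod_eigc p 0
  simpa using this

theorem cosh_th (p i : ℕ) : Real.cosh (th p i) = 1 + eigc (p + 1) (i + 1) / 2 := by
  rw [th, cosh_gth, eigc_succ]; ring

theorem tau_eq (p q : ℕ) : (gridTau (p + 1) (q + 1) : ℝ) =
    ∏ i ∈ range p, (Polynomial.Chebyshev.U ℝ q).eval (Real.cosh (th p i)) := by
  have h := gridTau_prod (p + 1) (q + 1) (by omega) (by omega)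
  have h1 : ∏ k ∈ (univ : Finset (Fin (p + 1) × Fin (q + 1))).erase (⟨0, by omega⟩, ⟨0, by omega⟩),
        (eigc (p + 1) k.1 + eigc (q + 1) k.2) =
      ∏ k : Fin (p + 1) × Fin (q + 1), if k = (0, 0) then 1 else
        (eigc (p + 1) k.1 + eigc (q + 1) k.2) := by
    rw [← mul_prod_erase univ _ (mem_univ ((0, 0) : Fin (p + 1) × Fin (q + 1)))]
    rw [if_pos rfl, one_mul]
    refine prod_congr rfl fun k hk => ?_
    rw [if_neg (ne_of_mem_erase hk)]
  rw [h1, Fintype.prod_prod_type, Fin.prod_univ_succ] at h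
  simp_rw [Fin.prod_univ_succ (n := q)] at h
  simp only [Prod.mk.injEq, Fin.succ_ne_zero, and_false, false_and, if_false, and_self, if_true,
    one_mul, Fin.val_zero, eigc_zero, zero_add, add_zero, Fin.val_succ] at h
  rw [Fin.prod_univ_eq_prod_range (fun j => eigc (q + 1) (j + 1)) q, prod_eigc_zero,
    prod_mul_distrib,
    Fin.prod_univ_eq_prod_range (fun j => eigc (p + 1) (j + 1)) p, prod_eigc_zero] at h
  simp_rw [fun x : Fin p => Fin.prod_univ_eq_prod_range
    (fun j => eigc (p + 1) ((x : ℕ) + 1) + eigc (q + 1) (j + 1)) q, prod_eigc] at h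
  rw [Fin.prod_univ_eq_prod_range (fun x => (Polynomial.Chebyshev.U ℝ q).eval
    (1 + eigc (p + 1) (x + 1) / 2)) p] at h
  simp_rw [cosh_th]
  have h0 : (((p + 1) * (q + 1) : ℕ) : ℝ) ≠ 0 := by positivity
  apply mul_left_cancel₀ h0
  rw [h]; push_cast; ring

theorem tau_sq (p q : ℕ) : (gridTau (p + 1) (q + 1) : ℝ) ^ 2 *
    (((p + 1 : ℕ) : ℝ) * Real.sinh ((p + 1 : ℕ) * (2 * cc))) =
    Real.sinh (2 * cc) * (∏ i ∈ range p, 2 * Real.sinh ((q + 1 : ℕ) * th p i)) ^ 2 := by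
  have h1 : ((p + 1 : ℕ) : ℝ) * (Polynomial.Chebyshev.U ℝ p).eval (Real.cosh (2 * cc)) =
      ∏ i ∈ range p, (2 * Real.sinh (th p i)) ^ 2 := by
    simp_rw [four_sinh_sq, cosh_th]
    rw [prod_mul_distrib, cosh_two_cc]
    have := prod_eigc p 4
    rw [show (1 : ℝ) + 4 / 2 = 3 by norm_num] at this
    rw [← this]
    have h2 := prod_eigc_zero p
    push_cast
    rw [← h2]
    congr 1 <;> refine prod_congr rfl fun j _ => ?_ <;> ring
  rw [← U_sinh, ← mul_assoc ((p + 1 : ℕ) : ℝ), h1, tau_eq, ← mul_assoc, mul_comm, ← prod_pow,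
    ← prod_pow, ← prod_mul_distrib]
  congr 1
  refine prod_congr rfl fun j _ => ?_
  rw [← U_sinh]; ring

theorem tau_upper (p q : ℕ) : (gridTau (p + 1) (q + 1) : ℝ) ^ 2 *
    (((p + 1 : ℕ) : ℝ) * Real.sinh ((p + 1 : ℕ) * (2 * cc))) ≤
    Real.sinh (2 * cc) * Real.exp (2 * (q + 1 : ℕ) * (Th p - cc)) := by
  have hc := cc_pos
  have hs : 0 < Real.sinh (2 * cc) := Real.sinh_pos_iff.2 (by positivity)
  have e : Real.exp (2 * (q + 1 : ℕ) * (Th p - cc)) =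
      (∏ i ∈ range p, Real.exp ((q + 1 : ℕ) * th p i)) ^ 2 := by
    rw [← Real.exp_sum, ← Real.exp_nat_mul, ← mul_sum, Th]
    congr 1; push_cast; ring
  rw [tau_sq, e]
  apply mul_le_mul_of_nonneg_left _ hs.le
  have hpos : ∀ i ∈ range p, 0 ≤ 2 * Real.sinh ((q + 1 : ℕ) * th p i) := by
    intro i hi
    have := th_pos (mem_range.1 hi)
    have := Real.sinh_nonneg_iff.2 (show 0 ≤ (q + 1 : ℕ) * th p i by positivity)
    linarith
  apply pow_le_pow_left₀ (prod_nonneg hpos)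
  apply prod_le_prod hpos
  intro i _
  rw [Real.sinh_eq]
  linarith [Real.exp_pos (-((q + 1 : ℕ) * th p i))]

theorem th_lower {p i : ℕ} (hi : i < p) :
    2 * Real.log 2 * ((i + 1) / (p + 1)) ≤ th p i := by
  set t : ℝ := ((i : ℝ) + 1) / (p + 1) with ht
  have hip : (i : ℝ) ≤ p := by exact_mod_cast hi.le
  have ht0 : 0 ≤ t := by positivity
  have ht1 : t ≤ 1 := by rw [ht, div_le_one (by positivity)]; linarith
  have hp := Real.pi_pos
  have h1 : t ≤ Real.sin (Real.pi * (i + 1) / (p + 1) / 2) := by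
    have := Real.mul_le_sin (x := Real.pi * t / 2) (by positivity) (by nlinarith)
    have e : 2 / Real.pi * (Real.pi * t / 2) = t := by field_simp
    rw [e] at this
    convert this using 2
    rw [ht]; ring
  have h2 : Real.log 2 * t ≤ Real.arsinh t := by
    rw [← Real.exp_le_exp, Real.exp_arsinh, ← Real.rpow_def_of_pos two_pos]
    have := rpow_one_add_le_one_add_mul_self (s := 1) (p := t) (by norm_num) ht0 ht1
    have h3 : 1 ≤ √(1 + t ^ 2) := Real.one_le_sqrt.2 (by nlinarith)
    norm_num at this
    linarith
  have h3 := Real.arsinh_le_arsinh.2 h1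
  unfold th gth
  linarith

theorem one_sub_sum_le_prod (x : ℕ → ℝ) (n : ℕ) (h0 : ∀ i < n, 0 ≤ x i) (h1 : ∀ i < n, x i ≤ 1) :
    1 - ∑ i ∈ range n, x i ≤ ∏ i ∈ range n, (1 - x i) := by
  induction n with
  | zero => simp
  | succ k ih =>
    have ih := ih (fun i hi => h0 i (by omega)) (fun i hi => h1 i (by omega))
    rw [sum_range_succ, prod_range_succ]
    have a0 := h0 k (by omega)
    have a1 := h1 k (by omega)
    have hs : 0 ≤ ∑ i ∈ range k, x i :=
      sum_nonneg fun i hi => h0 i (by have := mem_range.1 hi; omega)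
    nlinarith [mul_nonneg hs a0, mul_le_mul_of_nonneg_right ih (sub_nonneg.2 a1)]

theorem tau_lower (p q : ℕ) (hpq : p ≤ q) :
    Real.sinh (2 * cc) * (Real.exp (2 * (q + 1 : ℕ) * (Th p - cc)) * (14 / 15) ^ 2) ≤
    (gridTau (p + 1) (q + 1) : ℝ) ^ 2 *
    (((p + 1 : ℕ) : ℝ) * Real.sinh ((p + 1 : ℕ) * (2 * cc))) := by
  have hc := cc_pos
  have hs : 0 < Real.sinh (2 * cc) := Real.sinh_pos_iff.2 (by positivity)
  have e : Real.exp (2 * (q + 1 : ℕ) * (Th p - cc)) =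
      (∏ i ∈ range p, Real.exp ((q + 1 : ℕ) * th p i)) ^ 2 := by
    rw [← Real.exp_sum, ← Real.exp_nat_mul, ← mul_sum, Th]
    congr 1; push_cast; ring
  have e2 : ∏ i ∈ range p, 2 * Real.sinh ((q + 1 : ℕ) * th p i) =
      (∏ i ∈ range p, Real.exp ((q + 1 : ℕ) * th p i)) *
        ∏ i ∈ range p, (1 - Real.exp (-(2 * ((q + 1 : ℕ) * th p i)))) := by
    rw [← prod_mul_distrib]
    refine prod_congr rfl fun i _ => ?_
    rw [mul_sub, ← Real.exp_add, Real.sinh_eq]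
    ring_nf
  rw [tau_sq, e, e2, mul_pow]
  have hb : ∀ i < p, Real.exp (-(2 * ((q + 1 : ℕ) * th p i))) ≤ (1 / 16 : ℝ) ^ (i + 1) := by
    intro i hi
    have h1 := th_lower hi
    have hl : 0 < Real.log 2 := Real.log_pos (by norm_num)
    have e3 : (1 / 16 : ℝ) ^ (i + 1) = Real.exp (-(4 * Real.log 2 * (i + 1))) := by
      have : (1 / 16 : ℝ) = Real.exp (-(4 * Real.log 2)) := by
        rw [Real.exp_neg, mul_comm, Real.exp_mul, Real.exp_log two_pos]; norm_num
      rw [this, ← Real.exp_nat_mul]; congr 1; push_cast; ring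
    rw [e3, Real.exp_le_exp]
    have hq : (p : ℝ) + 1 ≤ (q + 1 : ℕ) := by
      push_cast
      have : (p : ℝ) ≤ q := by exact_mod_cast hpq
      linarith
    have h3 : 2 * Real.log 2 * (i + 1) ≤ (p + 1) * th p i := by
      have : 2 * Real.log 2 * ((i : ℝ) + 1) = (p + 1) * (2 * Real.log 2 * ((i + 1) / (p + 1))) := by
        field_simp
      rw [this]
      gcongr
    have h4 : (p + 1) * th p i ≤ (q + 1 : ℕ) * th p i :=
      mul_le_mul_of_nonneg_right hq (th_pos hi).le
    linarith
  have hprod : (14 / 15 : ℝ) ≤ ∏ i ∈ range p, (1 - Real.exp (-(2 * ((q + 1 : ℕ) * th p i)))) := by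
    refine le_trans ?_ (one_sub_sum_le_prod _ p (fun i _ => (Real.exp_pos _).le) ?_)
    · have h1 : ∑ i ∈ range p, Real.exp (-(2 * ((q + 1 : ℕ) * th p i))) ≤
          ∑ i ∈ range p, (1 / 16 : ℝ) ^ (i + 1) :=
        sum_le_sum fun i hi => hb i (mem_range.1 hi)
      have h2 : ∀ p : ℕ, ∑ i ∈ range p, (1 / 16 : ℝ) ^ (i + 1) = 1 / 15 - (1 / 16) ^ p / 15 := by
        intro p
        induction p with
        | zero => norm_num
        | succ k ih => rw [sum_range_succ, ih]; ring
      rw [h2] at h1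
      have : (0 : ℝ) < (1 / 16) ^ p := by positivity
      linarith
    · intro i hi
      exact (hb i hi).trans (pow_le_one₀ (by norm_num) (by norm_num))
  gcongr

theorem exp_two_cc : Real.exp (2 * cc) = 3 + 2 * √2 := by
  rw [two_mul, Real.exp_add, cc, Real.exp_arsinh]
  norm_num
  nlinarith [Real.sq_sqrt (show (0 : ℝ) ≤ 2 by norm_num)]

theorem exp_two_cc_ge : 5.8 ≤ Real.exp (2 * cc) := by
  rw [exp_two_cc]
  have : (1.4 : ℝ) ≤ √2 := Real.le_sqrt_of_sq_le (by norm_num)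
  linarith

set_option maxHeartbeats 1000000 in
theorem main_aux (p q p' q' : ℕ) (harea : (p + 1) * (q + 1) = (p' + 1) * (q' + 1))
    (h1 : p < p') (h2 : p' ≤ q') : gridTau (p + 1) (q + 1) < gridTau (p' + 1) (q' + 1) := by
  by_contra! hle
  have hc := cc_pos
  have hs : 0 < Real.sinh (2 * cc) := Real.sinh_pos_iff.2 (by positivity)
  have hu := tau_upper p q
  have hlo := tau_lower p' q' h2
  have hle' : (gridTau (p' + 1) (q' + 1) : ℝ) ^ 2 ≤ (gridTau (p + 1) (q + 1) : ℝ) ^ 2 := by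
    have : (gridTau (p' + 1) (q' + 1) : ℝ) ≤ (gridTau (p + 1) (q + 1) : ℝ) := by exact_mod_cast hle
    gcongr
  have hT := Th_mono h1.le
  set l : ℝ := ((p + 1 : ℕ) : ℝ) with hl
  set m : ℝ := ((q + 1 : ℕ) : ℝ) with hm
  set l' : ℝ := ((p' + 1 : ℕ) : ℝ) with hl'
  set m' : ℝ := ((q' + 1 : ℕ) : ℝ) with hm'
  have hA : l * m = l' * m' := by rw [hl, hm, hl', hm']; exact_mod_cast harea
  have hl1 : 1 ≤ l := by rw [hl]; push_cast; linarith [Nat.cast_nonneg (α := ℝ) p]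
  have hll : l + 1 ≤ l' := by rw [hl, hl']; exact_mod_cast (by omega)
  have hlm : l' ≤ m' := by rw [hm', hl']; exact_mod_cast (by omega)
  -- the perimeter difference
  have hDl : l * (l + m - l' - m') = (l' - l) * (m' - l) := by linear_combination hA
  have hDl2 : (l' - l) ^ 2 ≤ l * (l + m - l' - m') := by
    rw [hDl]; nlinarith
  have hDpos : 0 < l + m - l' - m' := by
    have : 0 < l * (l + m - l' - m') := by nlinarith
    exact pos_of_mul_pos_right this (by linarith)
  obtain ⟨D, hD⟩ : ∃ D : ℕ, (D : ℝ) = l + m - l' - m' := by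
    refine ⟨p + 1 + (q + 1) - (p' + 1) - (q' + 1), ?_⟩
    rw [hl, hm, hl', hm'] at hDpos ⊢
    have : p' + 1 + (q' + 1) < p + 1 + (q + 1) := by
      have : (p' + 1 : ℕ) + (q' + 1 : ℕ) < ((p + 1 : ℕ) : ℝ) + (q + 1 : ℕ) := by linarith
      exact_mod_cast this
    rw [Nat.cast_sub (by omega), Nat.cast_sub (by omega)]
    push_cast; ring
  have hD1 : (1 : ℝ) ≤ D := by
    have : (0 : ℝ) < D := by rw [hD]; exact hDpos
    exact_mod_cast this
  -- exponent comparison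
  have hmT : m * Th p ≤ m' * Th p' := by
    have h3 : m * (l' * Th p) ≤ m * (l * Th p') := mul_le_mul_of_nonneg_left hT (by positivity)
    have h4 : m * (l * Th p') = l' * (m' * Th p') := by linear_combination Th p' * hA
    rw [h4, mul_left_comm] at h3
    exact le_of_mul_le_mul_left h3 (by linarith)
  -- sinh bounds
  have hsu : Real.sinh (l' * (2 * cc)) ≤ Real.exp (l' * (2 * cc)) / 2 := by
    rw [Real.sinh_eq]; linarith [Real.exp_pos (-(l' * (2 * cc)))]
  have hsl : Real.exp (l * (2 * cc)) / 2 * 0.9 ≤ Real.sinh (l * (2 * cc)) := by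
    rw [Real.sinh_eq]
    have h5 : 5.8 ≤ Real.exp (l * (2 * cc)) :=
      exp_two_cc_ge.trans (Real.exp_le_exp.2 (by nlinarith))
    have h6 : Real.exp (-(l * (2 * cc))) * Real.exp (l * (2 * cc)) = 1 := by
      rw [← Real.exp_add]; simp
    nlinarith [Real.exp_pos (-(l * (2 * cc)))]
  set τ2 := (gridTau (p + 1) (q + 1) : ℝ) ^ 2 with hτ
  have hτ0 : 0 ≤ τ2 := by positivity
  have hl'0 : 0 < l' := by linarith
  have hl0 : 0 < l := by linarith
  have k1 : Real.sinh (2 * cc) * (Real.exp (2 * m' * (Th p' - cc)) * (14 / 15) ^ 2) ≤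
      τ2 * (l' * (Real.exp (l' * (2 * cc)) / 2)) := by
    refine hlo.trans ?_
    gcongr
  have k2 : τ2 * (l * (Real.exp (l * (2 * cc)) / 2 * 0.9)) ≤
      Real.sinh (2 * cc) * Real.exp (2 * m * (Th p - cc)) := by
    refine le_trans ?_ hu
    gcongr
  have k3 : Real.exp (2 * m * (Th p - cc)) * Real.exp (l' * (2 * cc)) * Real.exp (2 * cc) ^ D ≤
      Real.exp (2 * m' * (Th p' - cc)) * Real.exp (l * (2 * cc)) := by
    rw [← Real.exp_nat_mul, ← Real.exp_add, ← Real.exp_add, ← Real.exp_add, Real.exp_le_exp, hD]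
    nlinarith
  have k4 : 1 + D * (4.8 : ℝ) ≤ Real.exp (2 * cc) ^ D := by
    have := one_add_mul_le_pow (a := (4.8 : ℝ)) (by norm_num) D
    refine this.trans ?_
    have := exp_two_cc_ge
    gcongr
    linarith
  -- combine
  set E := Real.exp (2 * m * (Th p - cc)) with hE
  set E' := Real.exp (2 * m' * (Th p' - cc)) with hE'
  set a := Real.exp (l * (2 * cc)) with ha
  set a' := Real.exp (l' * (2 * cc)) with ha'
  set s := Real.sinh (2 * cc) with hs'
  set B := Real.exp (2 * cc) ^ D with hB
  have pE : 0 < E := Real.exp_pos _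
  have pa : 0 < a := Real.exp_pos _
  have pa' : 0 < a' := Real.exp_pos _
  have c1 : s * (E' * (14 / 15) ^ 2) * (l * (a / 2 * 0.9)) ≤ s * E * (l' * (a' / 2)) := by
    calc s * (E' * (14 / 15) ^ 2) * (l * (a / 2 * 0.9)) ≤
        τ2 * (l' * (a' / 2)) * (l * (a / 2 * 0.9)) := by gcongr
      _ = τ2 * (l * (a / 2 * 0.9)) * (l' * (a' / 2)) := by ring
      _ ≤ _ := by gcongr
  have c2 : s * (E * a' * B) * ((14 / 15) ^ 2 * l * (0.9 / 2)) ≤ s * (E * a') * (l' / 2) := by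
    calc s * (E * a' * B) * ((14 / 15) ^ 2 * l * (0.9 / 2)) ≤
        s * (E' * a) * ((14 / 15) ^ 2 * l * (0.9 / 2)) := by gcongr
      _ = s * (E' * (14 / 15) ^ 2) * (l * (a / 2 * 0.9)) := by ring
      _ ≤ s * E * (l' * (a' / 2)) := c1
      _ = _ := by ring
  have c3 : B * ((14 / 15) ^ 2 * l * (0.9 / 2)) ≤ l' / 2 := by
    have hp : 0 < s * (E * a') := by positivity
    refine le_of_mul_le_mul_left ?_ hp
    calc s * (E * a') * (B * ((14 / 15) ^ 2 * l * (0.9 / 2))) =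
        s * (E * a' * B) * ((14 / 15) ^ 2 * l * (0.9 / 2)) := by ring
      _ ≤ _ := c2
  have c4 : (1 + D * 4.8) * ((14 / 15) ^ 2 * l * (0.9 / 2)) ≤ l' / 2 :=
    (mul_le_mul_of_nonneg_right k4 (by positivity)).trans c3
  rw [← hD] at hDl2
  have c5 : l ≤ l * D := by nlinarith
  norm_num at c4
  nlinarith

theorem strict_balancing (l m l' m' : ℕ) (hl : 0 < l) (hm : 0 < m) (hl' : 0 < l') (hm' : 0 < m')
    (harea : l * m = l' * m') (h1 : l < l') (h2 : l' ≤ m') (h3 : m' ≤ m) :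
    gridTau l m < gridTau l' m' := by
  obtain ⟨p, rfl⟩ := Nat.exists_eq_succ_of_ne_zero hl.ne'
  obtain ⟨q, rfl⟩ := Nat.exists_eq_succ_of_ne_zero hm.ne'
  obtain ⟨p', rfl⟩ := Nat.exists_eq_succ_of_ne_zero hl'.ne'
  obtain ⟨q', rfl⟩ := Nat.exists_eq_succ_of_ne_zero hm'.ne'
  exact main_aux p q p' q' harea (by omega) (by omega)
end
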